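/- Let γ : [a,b] → ℝ³ be a rectifiable constant-speed curve with |γ(t)| ≥ 1 for all t, and let γ̃ : [a,b] → ℝ² be its unfolding. Then |γ̃(t)| = |γ(t)| for all t, L(γ̃) = L(γ), and H(ι ∘ γ̃) = H(γ), where ι : ℝ² → ℝ³ is the standard isometric embedding (x,y) ↦ (x,y,0); in particular E(ι ∘ γ̃) = E(γ). -/

import Mathlib

open MeasureTheory Set Real
open scoped ENNReal NNReal RealInnerProductSpace

noncomputable section

abbrev E3 := EuclideanSpace ℝ (Fin 3)
abbrev E2 := EuclideanSpace ℝ (Fin 2)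

/-- The horizon of a curve: the measure, counted with multiplicity, of the set of points
`p` of the unit sphere whose tangent plane `{x : ⟨x,p⟩ = 1}` meets the curve. -/
def horizon (a b : ℝ) (γ : ℝ → E3) : ℝ≥0∞ :=
  ∫⁻ p : Metric.sphere (0 : E3) 1,
    ({t ∈ Set.Ico a b | ⟪γ t, (p : E3)⟫ = 1}.encard : ℝ≥0∞)
      ∂((volume : Measure E3).toSphere)

/-- The arclength of the radial (spherical) projection `γ/|γ|` over `[a,t]`. -/
def sphericalArc (a : ℝ) (γ : ℝ → E3) (t : ℝ) : ℝ :=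
  (eVariationOn (fun s => ‖γ s‖⁻¹ • γ s) (Set.Icc a t)).toReal

/-- The (cone) unfolding of a space curve: the planar curve with the same height and
the spherical arclength as polar angle. -/
def unfolding (a : ℝ) (γ : ℝ → E3) (t : ℝ) : E2 :=
  ‖γ t‖ • (WithLp.equiv 2 (Fin 2 → ℝ)).symm
    ![Real.cos (sphericalArc a γ t), Real.sin (sphericalArc a γ t)]

/-- The standard isometric embedding `ℝ² → ℝ³`, `(x,y) ↦ (x,y,0)`. -/
def emb (v : E2) : E3 := (WithLp.equiv 2 (Fin 3 → ℝ)).symm ![v 0, v 1, 0]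

/-!
A plane at distance one from the origin contains `γ t` exactly when its unit normal `p` satisfies
`⟪γ t, p⟫ = 1`, that is, when `p` spans a ray of the cone `{v | ⟪γ t, v⟫ = ‖v‖}`. The horizon is
therefore, up to the factor three, the volume swept out by these cones inside the unit ball, counted
with multiplicity. By the area formula, this volume is the integral over `t` of a density which, by
rotational symmetry, depends only on `‖γ‖`, `‖γ'‖` and `⟪γ, γ'⟫ = (‖γ‖²)' / 2`. Unfolding preserves
the norm by construction and the speed because, in polar coordinates `γ = ρ u`, the speed satisfies
`‖γ'‖² = ρ'² + ρ² ‖u'‖²`.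

The cones must be parametrized differentiably in `t`. The reflection exchanging `γ t` with a
multiple of a fixed axis does this as long as no `γ t` lies on the axis, and almost every axis
qualifies because the cone over a Lipschitz curve is a null set.
-/

open scoped Topology

/-- The Banach indicatrix `y ↦ #(s ∩ f⁻¹{y})` of `f` on `s`, with values in `ℝ≥0∞` so that it can
be integrated. -/
def banachIndicatrix {α β : Type*} (f : α → β) (s : Set α) (y : β) : ℝ≥0∞ :=
  ({x ∈ s | f x = y}.encard : ℝ≥0∞)

namespace banachIndicatrix

variable {α β : Type*} {f : α → β}

lemma iUnion_eq_tsum {s : ℕ → Set α} (hs : Pairwise (Function.onFun Disjoint s)) (y : β) :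
    banachIndicatrix f (⋃ n, s n) y = ∑' n, banachIndicatrix f (s n) y := by
  let _ : MeasurableSpace α := ⊤
  have hfiber : {x ∈ ⋃ n, s n | f x = y} = ⋃ n, {x ∈ s n | f x = y} := by
    ext x
    simp
  have hdisj : Pairwise (Function.onFun Disjoint fun n => {x ∈ s n | f x = y}) :=
    fun i j hij => (hs hij).mono (fun _ hx => hx.1) (fun _ hx => hx.1)
  simpa only [banachIndicatrix, hfiber, Measure.count_apply MeasurableSpace.measurableSet_top]
    using measure_iUnion (μ := (Measure.count : Measure α)) hdisj fun _ => trivial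

lemma eq_indicator_image {s : Set α} (hf : InjOn f s) :
    banachIndicatrix f s = (f '' s).indicator 1 := by
  funext y
  by_cases hy : y ∈ f '' s
  · obtain ⟨x, hx, rfl⟩ := hy
    have hfiber : {z ∈ s | f z = f x} = {x} :=
      Subset.antisymm (fun z hz => hf hz.1 hx hz.2) (by simpa using hx)
    rw [banachIndicatrix, hfiber, indicator_of_mem (mem_image_of_mem f hx), encard_singleton,
      ENat.toENNReal_one, Pi.one_apply]
  · have hfiber : {z ∈ s | f z = y} = ∅ :=
      eq_empty_of_forall_notMem fun z hz => hy ⟨z, hz.1, hz.2⟩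
    rw [banachIndicatrix, hfiber, indicator_of_notMem hy, encard_empty, ENat.toENNReal_zero]

lemma diff_eq_of_notMem_image {s u : Set α} {y : β} (hy : y ∉ f '' u) :
    banachIndicatrix f (s \ u) y = banachIndicatrix f s y := by
  have hfiber : {x ∈ s \ u | f x = y} = {x ∈ s | f x = y} :=
    Subset.antisymm (fun x hx => ⟨hx.1.1, hx.2⟩)
      fun x hx => ⟨⟨hx.1, fun hxu => hy ⟨x, hxu, hx.2⟩⟩, hx.2⟩
  rw [banachIndicatrix, hfiber, banachIndicatrix]

end banachIndicatrix

section AreaFormula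

variable {E : Type*} [NormedAddCommGroup E] [NormedSpace ℝ E] [FiniteDimensional ℝ E]

lemma exists_injOn_of_approximatesLinearOn {A : E →L[ℝ] E} (hA : A.det ≠ 0) :
    ∃ c : ℝ≥0, c ≠ 0 ∧ ∀ (g : E → E) (u : Set E), ApproximatesLinearOn g A u c → InjOn g u := by
  rcases subsingleton_or_nontrivial E with hE | hE
  · exact ⟨1, one_ne_zero, fun g u _ => injOn_of_subsingleton g u⟩
  let A' := A.toContinuousLinearEquivOfDetNeZero hA
  have hpos : 0 < ‖(A'.symm : E →L[ℝ] E)‖₊⁻¹ := inv_pos.2 A'.nnnorm_symm_pos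
  refine ⟨‖(A'.symm : E →L[ℝ] E)‖₊⁻¹ / 2, (half_pos hpos).ne', fun g u hg => ?_⟩
  have hg' : ApproximatesLinearOn g (A' : E →L[ℝ] E) u
      (‖(A'.symm : E →L[ℝ] E)‖₊⁻¹ / 2) := by
    simpa [A'] using hg
  exact hg'.injOn (Or.inr (NNReal.half_lt_self hpos.ne'))

variable [MeasurableSpace E] [BorelSpace E] {s : Set E} {f : E → E} {f' : E → E →L[ℝ] E}

lemma exists_injOn_partition_of_det_ne_zero
    (hf' : ∀ x ∈ s, HasFDerivWithinAt f (f' x) s x) (hdet : ∀ x ∈ s, (f' x).det ≠ 0) :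
    ∃ t : ℕ → Set E, Pairwise (Function.onFun Disjoint t) ∧ (∀ n, MeasurableSet (t n)) ∧
      s ⊆ ⋃ n, t n ∧ ∀ n, InjOn f (s ∩ t n) := by
  have hscale (A : E →L[ℝ] E) : ∃ c : ℝ≥0, c ≠ 0 ∧ (A.det ≠ 0 →
      ∀ (g : E → E) (u : Set E), ApproximatesLinearOn g A u c → InjOn g u) := by
    by_cases hA : A.det = 0
    · exact ⟨1, one_ne_zero, fun h => absurd hA h⟩
    · obtain ⟨c, hc, hinj⟩ := exists_injOn_of_approximatesLinearOn hA
      exact ⟨c, hc, fun _ => hinj⟩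
  choose r hr hinj using hscale
  obtain ⟨t, A, hdisj, hmeas, hcover, happrox, hA⟩ :=
    exists_partition_approximatesLinearOn_of_hasFDerivWithinAt f s f' hf' r hr
  refine ⟨t, hdisj, hmeas, hcover, fun n => ?_⟩
  rcases s.eq_empty_or_nonempty with rfl | hs
  · simp
  · obtain ⟨y, hy, hAy⟩ := hA hs n
    exact hinj (A n) (hAy ▸ hdet y hy) f _ (happrox n)

/-- The area formula for `f` on `s`: the indicatrix of `f` on `s` is a.e. measurable and has the
same integral as the Jacobian `|det f'|`. -/
def AreaFormulaOn (μ : Measure E) (f : E → E) (f' : E → E →L[ℝ] E) (s : Set E) : Prop :=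
  AEMeasurable (banachIndicatrix f s) μ ∧
    ∫⁻ y, banachIndicatrix f s y ∂μ = ∫⁻ x in s, ENNReal.ofReal |(f' x).det| ∂μ

variable (μ : Measure E) [μ.IsAddHaarMeasure]

lemma areaFormulaOn_of_injOn (hs : MeasurableSet s)
    (hf' : ∀ x ∈ s, HasFDerivWithinAt f (f' x) s x) (hf : InjOn f s) :
    AreaFormulaOn μ f f' s := by
  have himage : MeasurableSet (f '' s) := measurable_image_of_fderivWithin hs hf' hf
  rw [AreaFormulaOn, banachIndicatrix.eq_indicator_image hf]
  exact ⟨(measurable_one.indicator himage).aemeasurable, by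
    rw [lintegral_indicator_one himage, lintegral_abs_det_fderiv_eq_addHaar_image μ hs hf' hf]⟩

lemma areaFormulaOn_of_det_ne_zero (hs : MeasurableSet s)
    (hf' : ∀ x ∈ s, HasFDerivWithinAt f (f' x) s x) (hdet : ∀ x ∈ s, (f' x).det ≠ 0) :
    AreaFormulaOn μ f f' s := by
  obtain ⟨t, htdisj, htmeas, hcover, hinj⟩ := exists_injOn_partition_of_det_ne_zero hf' hdet
  have hmeas (n : ℕ) : MeasurableSet (s ∩ t n) := hs.inter (htmeas n)
  have hdisj : Pairwise (Function.onFun Disjoint fun n => s ∩ t n) :=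
    fun i j hij => (htdisj hij).mono inter_subset_right inter_subset_right
  have hpiece (n : ℕ) : AreaFormulaOn μ f f' (s ∩ t n) :=
    areaFormulaOn_of_injOn μ (hmeas n) (fun x hx => (hf' x hx.1).mono inter_subset_left) (hinj n)
  have hunion : ⋃ n, s ∩ t n = s := by rw [← inter_iUnion, inter_eq_left.2 hcover]
  have hsum : banachIndicatrix f s = fun y => ∑' n, banachIndicatrix f (s ∩ t n) y := by
    funext y
    rw [← banachIndicatrix.iUnion_eq_tsum hdisj, hunion]
  refine ⟨hsum ▸ AEMeasurable.tsum fun n => (hpiece n).1, ?_⟩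
  calc ∫⁻ y, banachIndicatrix f s y ∂μ = ∑' n, ∫⁻ y, banachIndicatrix f (s ∩ t n) y ∂μ := by
        rw [hsum, lintegral_tsum fun n => (hpiece n).1]
    _ = ∑' n, ∫⁻ x in s ∩ t n, ENNReal.ofReal |(f' x).det| ∂μ :=
        tsum_congr fun n => (hpiece n).2
    _ = ∫⁻ x in s, ENNReal.ofReal |(f' x).det| ∂μ := by
        rw [← lintegral_iUnion hmeas hdisj, hunion]

/-- The critical values form a null set by Sard's theorem, so the critical points of `f` do not
contribute to either side. -/
theorem areaFormulaOn_of_hasFDerivWithinAt (hs : MeasurableSet s)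
    (hf' : ∀ x ∈ s, HasFDerivWithinAt f (f' x) s x) (hmeas : Measurable f') :
    AreaFormulaOn μ f f' s := by
  let crit : Set E := {x | (f' x).det = 0}
  have hcrit : MeasurableSet crit :=
    (ContinuousLinearMap.continuous_det.measurable.comp hmeas) (measurableSet_singleton 0)
  have hnull : μ (f '' (s ∩ crit)) = 0 :=
    addHaar_image_eq_zero_of_det_fderivWithin_eq_zero μ
      (fun x hx => (hf' x hx.1).mono inter_subset_left) fun x hx => hx.2
  have hindicatrix : banachIndicatrix f (s \ crit) =ᵐ[μ] banachIndicatrix f s := by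
    filter_upwards [measure_eq_zero_iff_ae_notMem.1 hnull] with y hy
    rw [← sdiff_self_inter, banachIndicatrix.diff_eq_of_notMem_image hy]
  obtain ⟨haemeas, hint⟩ := areaFormulaOn_of_det_ne_zero μ (f := f) (hs.diff hcrit)
    (fun x hx => (hf' x hx.1).mono sdiff_subset) fun x hx => hx.2
  have hzero : ∫⁻ x in s ∩ crit, ENNReal.ofReal |(f' x).det| ∂μ = 0 := by
    rw [setLIntegral_congr_fun (g := 0) (hs.inter hcrit) fun x hx => by
      simp [show (f' x).det = 0 from hx.2]]
    simp
  refine ⟨haemeas.congr hindicatrix, ?_⟩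
  rw [← lintegral_congr_ae hindicatrix, hint,
    ← lintegral_inter_add_sdiff (μ := μ) (fun x => ENNReal.ofReal |(f' x).det|) s hcrit, hzero,
    zero_add]

end AreaFormula

section NullImages

variable {E F : Type*} [NormedAddCommGroup E] [NormedSpace ℝ E] [NormedAddCommGroup F]
  [NormedSpace ℝ F] {f : E → F} {s : Set E}

lemma locallyLipschitzOn_comp_of_contDiffAt {X : Type*} [PseudoEMetricSpace X] {g : X → E}
    {s : Set X} {K : ℝ≥0} (hg : LipschitzOnWith K g s)
    (hf : ∀ x ∈ s, ContDiffAt ℝ 1 f (g x)) : LocallyLipschitzOn s fun x => f (g x) := by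
  intro x hx
  obtain ⟨L, u, hu, hL⟩ := (hf x hx).exists_lipschitzOnWith
  refine ⟨L * K, s ∩ g ⁻¹' u, ?_, hL.comp (hg.mono inter_subset_left) fun y hy => hy.2⟩
  exact Filter.inter_mem self_mem_nhdsWithin (hg.continuousOn x hx hu)

variable [FiniteDimensional ℝ E] [FiniteDimensional ℝ F] [MeasurableSpace F] [BorelSpace F]

lemma addHaar_image_eq_zero_of_locallyLipschitzOn [MeasurableSpace E] [BorelSpace E]
    (μ : Measure E) [μ.IsAddHaarMeasure] (ν : Measure F) [ν.IsAddHaarMeasure]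
    (hdim : Module.finrank ℝ E = Module.finrank ℝ F) (hf : LocallyLipschitzOn s f)
    (hs : μ s = 0) : ν (f '' s) = 0 := by
  have hs' : μH[(Module.finrank ℝ E : ℝ)] s = 0 := by
    rw [Measure.isAddLeftInvariant_eq_smul μH[(Module.finrank ℝ E : ℝ)] μ]
    simp [hs]
  have hloc : ∀ x ∈ s, ∃ K : ℝ≥0, ∃ u ∈ 𝓝[s] x, LipschitzOnWith K f u := fun x hx => hf hx
  choose! K u hu hK using hloc
  obtain ⟨c, hcs, hc, hcover⟩ := TopologicalSpace.countable_cover_nhdsWithin (f := u) hu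
  have himage : f '' s ⊆ ⋃ x ∈ c, f '' (s ∩ u x) := by
    rw [← image_iUnion₂, ← inter_iUnion₂]
    exact image_mono (subset_inter Subset.rfl hcover)
  refine measure_mono_null himage ((measure_biUnion_null_iff hc).2 fun x hx => ?_)
  have hle := ((hK x (hcs hx)).mono inter_subset_right).hausdorffMeasure_image_le (s := s ∩ u x)
    (d := (Module.finrank ℝ E : ℝ)) (by positivity)
  rw [measure_mono_null inter_subset_left hs', mul_zero, nonpos_iff_eq_zero, hdim] at hle
  rw [Measure.isAddLeftInvariant_eq_smul ν μH[(Module.finrank ℝ F : ℝ)]]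
  simp [hle]

lemma addHaar_image_eq_zero_of_finrank_lt (ν : Measure F) [ν.IsAddHaarMeasure]
    (hdim : Module.finrank ℝ E < Module.finrank ℝ F) (hf : LocallyLipschitzOn s f) :
    ν (f '' s) = 0 := by
  have hlt : dimH (f '' s) < (Module.finrank ℝ F : ℝ≥0) :=
    calc dimH (f '' s) ≤ dimH s := dimH_image_le_of_locally_lipschitzOn fun x hx => hf hx
      _ ≤ dimH (univ : Set E) := dimH_mono (subset_univ s)
      _ = Module.finrank ℝ E := Real.dimH_univ_eq_finrank E
      _ < (Module.finrank ℝ F : ℝ≥0) := by exact_mod_cast hdim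
  have hzero : μH[(Module.finrank ℝ F : ℝ)] (f '' s) = 0 := by
    simpa using hausdorffMeasure_of_dimH_lt hlt
  rw [Measure.isAddLeftInvariant_eq_smul ν μH[(Module.finrank ℝ F : ℝ)]]
  simp [hzero]

end NullImages

section ArcLength

/-- The length of the curve `f` over `[a, t]`, as a function of `t`; only meaningful where `f` has
bounded variation. -/
def arcLength {M : Type*} [PseudoEMetricSpace M] (f : ℝ → M) (a t : ℝ) : ℝ :=
  (eVariationOn f (Icc a t)).toReal

lemma eVariationOn_mono_of_edist_le {α M N : Type*} [LinearOrder α] [PseudoEMetricSpace M]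
    [PseudoEMetricSpace N] {f : α → M} {g : α → N} {s : Set α}
    (h : ∀ x ∈ s, ∀ y ∈ s, x ≤ y → edist (f y) (f x) ≤ edist (g y) (g x)) :
    eVariationOn f s ≤ eVariationOn g s :=
  iSup_le fun p => (Finset.sum_le_sum fun i _ =>
    h _ (p.2.2.2 i) _ (p.2.2.2 (i + 1)) (p.2.2.1 i.le_succ)).trans
      (eVariationOn.sum_le p.2.2.1 p.2.2.2)

variable {V : Type*} [NormedAddCommGroup V] {f : ℝ → V} {K : ℝ≥0} {a b : ℝ}

lemma eVariationOn_Icc_eq_of_monotoneOn {g : ℝ → ℝ} (hab : a ≤ b) (hg : MonotoneOn g (Icc a b)) :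
    eVariationOn g (Icc a b) = ENNReal.ofReal (g b - g a) := by
  simpa using hg.eVariationOn_eq (left_mem_Icc.2 hab) (right_mem_Icc.2 hab)

lemma eVariationOn_Icc_le_of_lipschitzOnWith (hf : LipschitzOnWith K f (Icc a b)) (hab : a ≤ b) :
    eVariationOn f (Icc a b) ≤ K * ENNReal.ofReal (b - a) := by
  simpa [eVariationOn_Icc_eq_of_monotoneOn hab monotoneOn_id]
    using hf.comp_eVariationOn_le (mapsTo_id (Icc a b))

lemma boundedVariationOn_of_lipschitzOnWith (hf : LipschitzOnWith K f (Icc a b)) :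
    BoundedVariationOn f (Icc a b) := by
  rcases le_total a b with hab | hba
  · exact ((eVariationOn_Icc_le_of_lipschitzOnWith hf hab).trans_lt
      (ENNReal.mul_lt_top ENNReal.coe_lt_top ENNReal.ofReal_lt_top)).ne
  · simp [BoundedVariationOn, eVariationOn.subsingleton f (subsingleton_Icc_of_ge hba)]

lemma ofReal_arcLength (hf : LipschitzOnWith K f (Icc a b)) :
    ENNReal.ofReal (arcLength f a b) = eVariationOn f (Icc a b) :=
  ENNReal.ofReal_toReal (boundedVariationOn_of_lipschitzOnWith hf)

lemma arcLength_sub_arcLength (hf : LipschitzOnWith K f (Icc a b)) {x y : ℝ} (hax : a ≤ x)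
    (hxy : x ≤ y) (hyb : y ≤ b) :
    arcLength f a y - arcLength f a x = (eVariationOn f (Icc x y)).toReal := by
  have hfinite {u v : ℝ} (hu : a ≤ u) (hv : v ≤ b) : eVariationOn f (Icc u v) ≠ ⊤ :=
    boundedVariationOn_of_lipschitzOnWith (hf.mono (Icc_subset_Icc hu hv))
  have hadd : eVariationOn f (Icc a x) + eVariationOn f (Icc x y) = eVariationOn f (Icc a y) := by
    simpa using eVariationOn.Icc_add_Icc f hax hxy (mem_univ x)
  rw [arcLength, arcLength, ← hadd,
    ENNReal.toReal_add (hfinite le_rfl (hxy.trans hyb)) (hfinite hax hyb), add_sub_cancel_left]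

lemma norm_sub_le_arcLength_sub (hf : LipschitzOnWith K f (Icc a b)) {x y : ℝ} (hax : a ≤ x)
    (hxy : x ≤ y) (hyb : y ≤ b) : ‖f y - f x‖ ≤ arcLength f a y - arcLength f a x := by
  rw [arcLength_sub_arcLength hf hax hxy hyb, ← dist_eq_norm, dist_edist]
  exact ENNReal.toReal_mono
    (boundedVariationOn_of_lipschitzOnWith (hf.mono (Icc_subset_Icc hax hyb)))
    (eVariationOn.edist_le f (right_mem_Icc.2 hxy) (left_mem_Icc.2 hxy))

lemma lipschitzOnWith_arcLength (hf : LipschitzOnWith K f (Icc a b)) :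
    LipschitzOnWith K (arcLength f a) (Icc a b) := by
  have hle {x y : ℝ} (hx : x ∈ Icc a b) (hy : y ∈ Icc a b) (hxy : x ≤ y) :
      dist (arcLength f a y) (arcLength f a x) ≤ K * dist y x := by
    rw [Real.dist_eq, arcLength_sub_arcLength hf hx.1 hxy hy.2, abs_of_nonneg ENNReal.toReal_nonneg,
      Real.dist_eq, abs_of_nonneg (sub_nonneg.2 hxy)]
    refine ENNReal.toReal_le_of_le_ofReal (mul_nonneg K.2 (sub_nonneg.2 hxy)) ?_
    simpa [ENNReal.ofReal_mul] using
      eVariationOn_Icc_le_of_lipschitzOnWith (hf.mono (Icc_subset_Icc hx.1 hy.2)) hxy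
  refine LipschitzOnWith.of_dist_le_mul fun x hx y hy => ?_
  rcases le_total x y with hxy | hyx
  · rw [dist_comm, dist_comm x]
    exact hle hx hy hxy
  · exact hle hy hx hyx

variable [NormedSpace ℝ V]

lemma norm_le_of_hasDerivAt_of_norm_sub_le {g : ℝ → ℝ} {f' : V} {g' t : ℝ}
    (hf : HasDerivAt f f' t) (hg : HasDerivAt g g' t)
    (hfg : ∀ᶠ x in 𝓝[>] t, ‖f x - f t‖ ≤ g x - g t) : ‖f'‖ ≤ g' := by
  have hslopef := (hasDerivWithinAt_iff_tendsto_slope' self_notMem_Ioi).1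
    (hf.hasDerivWithinAt (s := Ioi t))
  have hslopeg := (hasDerivWithinAt_iff_tendsto_slope' self_notMem_Ioi).1
    (hg.hasDerivWithinAt (s := Ioi t))
  refine le_of_tendsto_of_tendsto hslopef.norm hslopeg ?_
  filter_upwards [hfg, self_mem_nhdsWithin] with x hx htx
  have hpos : 0 ≤ (x - t)⁻¹ := inv_nonneg.2 (sub_nonneg.2 (le_of_lt htx))
  simp only [slope, vsub_eq_sub, norm_smul, smul_eq_mul, Real.norm_of_nonneg hpos]
  exact mul_le_mul_of_nonneg_left hx hpos

variable [FiniteDimensional ℝ V]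

lemma intervalIntegrable_norm_deriv_of_lipschitzOnWith (hab : a ≤ b)
    (hf : LipschitzOnWith K f (Icc a b)) :
    IntervalIntegrable (fun t => ‖deriv f t‖) volume a b := by
  borelize V
  have hbound : ∀ᵐ t ∂volume.restrict (uIoc a b), ‖‖deriv f t‖‖ ≤ ‖(K : ℝ)‖ := by
    rw [uIoc_of_le hab, ← restrict_Ioo_eq_restrict_Ioc]
    refine ae_restrict_of_forall_mem measurableSet_Ioo fun t ht => ?_
    simpa using norm_deriv_le_of_lipschitzOn (Icc_mem_nhds ht.1 ht.2) hf
  exact (intervalIntegrable_const (c := (K : ℝ))).mono_fun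
    (measurable_deriv f).norm.aestronglyMeasurable hbound

lemma ae_differentiableAt_of_lipschitzOnWith (hf : LipschitzOnWith K f (Icc a b)) :
    ∀ᵐ t : ℝ, t ∈ Ioo a b → DifferentiableAt ℝ f t := by
  have hdiff := hf.ae_differentiableWithinAt_real measurableSet_Icc
  rw [ae_restrict_iff' measurableSet_Icc] at hdiff
  filter_upwards [hdiff] with t ht hmem
  exact (ht (Ioo_subset_Icc_self hmem)).differentiableAt (Icc_mem_nhds hmem.1 hmem.2)

/-- Testing against a norming functional reduces this to the fundamental theorem of calculus for
real-valued functions. -/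
lemma norm_sub_le_integral_norm_deriv (hab : a ≤ b) (hf : LipschitzOnWith K f (Icc a b)) :
    ‖f b - f a‖ ≤ ∫ t in a..b, ‖deriv f t‖ := by
  obtain ⟨φ, hφ, hφf⟩ := exists_dual_vector'' ℝ (f b - f a)
  have hac : AbsolutelyContinuousOnInterval (φ ∘ f) a b :=
    (φ.lipschitz.comp_lipschitzOnWith ((uIcc_of_le hab).symm ▸ hf)).absolutelyContinuousOnInterval
  have hderiv : ∀ᵐ t ∂volume.restrict (Icc a b), deriv (φ ∘ f) t ≤ ‖deriv f t‖ := by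
    rw [← restrict_Ioo_eq_restrict_Icc, ae_restrict_iff' measurableSet_Ioo]
    filter_upwards [ae_differentiableAt_of_lipschitzOnWith hf] with t ht hmem
    rw [(φ.hasFDerivAt.comp_hasDerivAt t (ht hmem).hasDerivAt).deriv]
    exact (le_abs_self _).trans (φ.le_of_opNorm_le_of_le hφ le_rfl |>.trans_eq (one_mul _))
  calc ‖f b - f a‖ = ∫ t in a..b, deriv (φ ∘ f) t := by
        rw [hac.integral_deriv_eq_sub, Function.comp_apply, Function.comp_apply, ← map_sub, hφf]
        rfl
    _ ≤ ∫ t in a..b, ‖deriv f t‖ :=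
        intervalIntegral.integral_mono_ae_restrict hab hac.intervalIntegrable_deriv
          (intervalIntegrable_norm_deriv_of_lipschitzOnWith hab hf) hderiv

lemma arcLength_sub_le_integral_norm_deriv (hf : LipschitzOnWith K f (Icc a b)) {x y : ℝ}
    (hax : a ≤ x) (hxy : x ≤ y) (hyb : y ≤ b) :
    arcLength f a y - arcLength f a x ≤ ∫ t in x..y, ‖deriv f t‖ := by
  let G (t : ℝ) : ℝ := ∫ s in x..t, ‖deriv f s‖
  have hint {u v : ℝ} (hu : u ∈ Icc x y) (hv : v ∈ Icc x y) (huv : u ≤ v) :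
      IntervalIntegrable (fun t => ‖deriv f t‖) volume u v :=
    intervalIntegrable_norm_deriv_of_lipschitzOnWith huv
      (hf.mono (Icc_subset_Icc (hax.trans hu.1) (hv.2.trans hyb)))
  have hG {u v : ℝ} (hu : u ∈ Icc x y) (hv : v ∈ Icc x y) :
      G v - G u = ∫ s in u..v, ‖deriv f s‖ :=
    intervalIntegral.integral_interval_sub_left (hint (left_mem_Icc.2 hxy) hv hv.1)
      (hint (left_mem_Icc.2 hxy) hu hu.1)
  have hle {u v : ℝ} (hu : u ∈ Icc x y) (hv : v ∈ Icc x y) (huv : u ≤ v) :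
      ‖f v - f u‖ ≤ G v - G u :=
    hG hu hv ▸ norm_sub_le_integral_norm_deriv huv
      (hf.mono (Icc_subset_Icc (hax.trans hu.1) (hv.2.trans hyb)))
  have hmono : MonotoneOn G (Icc x y) := fun u hu v hv huv =>
    sub_nonneg.1 ((norm_nonneg _).trans (hle hu hv huv))
  have hvar : eVariationOn f (Icc x y) ≤ eVariationOn G (Icc x y) :=
    eVariationOn_mono_of_edist_le fun u hu v hv huv => by
      rw [edist_dist, edist_dist, dist_eq_norm, Real.dist_eq]
      exact ENNReal.ofReal_le_ofReal ((hle hu hv huv).trans (le_abs_self _))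
  rw [eVariationOn_Icc_eq_of_monotoneOn hxy hmono,
    hG (left_mem_Icc.2 hxy) (right_mem_Icc.2 hxy)] at hvar
  rw [arcLength_sub_arcLength hf hax hxy hyb]
  exact ENNReal.toReal_le_of_le_ofReal
    (intervalIntegral.integral_nonneg hxy fun t _ => norm_nonneg _) hvar

theorem ae_hasDerivAt_arcLength (hab : a ≤ b) (hf : LipschitzOnWith K f (Icc a b)) :
    ∀ᵐ t : ℝ, t ∈ Ioo a b → HasDerivAt (arcLength f a) ‖deriv f t‖ t := by
  filter_upwards [ae_differentiableAt_of_lipschitzOnWith hf,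
    ae_differentiableAt_of_lipschitzOnWith (lipschitzOnWith_arcLength hf),
    (intervalIntegrable_norm_deriv_of_lipschitzOnWith hab hf).ae_hasDerivAt_integral]
    with t hft hLt hGt ht
  have hG : HasDerivAt (fun x => ∫ s in t..x, ‖deriv f s‖) ‖deriv f t‖ t := by
    have hmem : t ∈ uIcc a b := uIcc_of_le hab ▸ Ioo_subset_Icc_self ht
    exact hGt hmem t hmem
  have hright : ∀ᶠ x in 𝓝[>] t, x ∈ Ioc t b := Ioc_mem_nhdsGT ht.2
  have hle : ‖deriv f t‖ ≤ deriv (arcLength f a) t :=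
    norm_le_of_hasDerivAt_of_norm_sub_le (hft ht).hasDerivAt (hLt ht).hasDerivAt
      (hright.mono fun x hx => norm_sub_le_arcLength_sub hf ht.1.le hx.1.le hx.2)
  have hge : ‖deriv (arcLength f a) t‖ ≤ ‖deriv f t‖ := by
    refine norm_le_of_hasDerivAt_of_norm_sub_le (hLt ht).hasDerivAt hG (hright.mono fun x hx => ?_)
    rw [intervalIntegral.integral_same, sub_zero, Real.norm_of_nonneg
      ((norm_nonneg _).trans (norm_sub_le_arcLength_sub hf ht.1.le hx.1.le hx.2))]
    exact arcLength_sub_le_integral_norm_deriv hf ht.1.le hx.1.le hx.2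
  rw [hle.antisymm ((le_abs_self _).trans hge)]
  exact (hLt ht).hasDerivAt

theorem arcLength_eq_integral_norm_deriv (hab : a ≤ b) (hf : LipschitzOnWith K f (Icc a b)) :
    arcLength f a b = ∫ t in a..b, ‖deriv f t‖ := by
  have hac : AbsolutelyContinuousOnInterval (arcLength f a) a b :=
    ((uIcc_of_le hab).symm ▸ lipschitzOnWith_arcLength hf :).absolutelyContinuousOnInterval
  have hzero : arcLength f a a = 0 := by simp [arcLength, eVariationOn.subsingleton]
  calc arcLength f a b = ∫ t in a..b, deriv (arcLength f a) t := by
        rw [hac.integral_deriv_eq_sub, hzero, sub_zero]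
    _ = ∫ t in a..b, ‖deriv f t‖ := by
        rw [intervalIntegral.integral_of_le hab, intervalIntegral.integral_of_le hab,
          ← restrict_Ioo_eq_restrict_Ioc]
        refine integral_congr_ae ((ae_restrict_iff' measurableSet_Ioo).2 ?_)
        filter_upwards [ae_hasDerivAt_arcLength hab hf] with t hderiv ht
        exact (hderiv ht).deriv

lemma eVariationOn_Icc_congr_of_norm_deriv_eq {W : Type*} [NormedAddCommGroup W] [NormedSpace ℝ W]
    [FiniteDimensional ℝ W] {g : ℝ → W} {L : ℝ≥0} (hab : a ≤ b)
    (hf : LipschitzOnWith K f (Icc a b)) (hg : LipschitzOnWith L g (Icc a b))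
    (hfg : ∀ᵐ t : ℝ, t ∈ Ioo a b → ‖deriv f t‖ = ‖deriv g t‖) :
    eVariationOn f (Icc a b) = eVariationOn g (Icc a b) := by
  rw [← ofReal_arcLength hf, ← ofReal_arcLength hg, arcLength_eq_integral_norm_deriv hab hf,
    arcLength_eq_integral_norm_deriv hab hg, intervalIntegral.integral_of_le hab,
    intervalIntegral.integral_of_le hab, ← restrict_Ioo_eq_restrict_Ioc]
  rw [integral_congr_ae ((ae_restrict_iff' measurableSet_Ioo).2 hfg)]

end ArcLength

section HorizonCone

/-- For a point at distance `r ≥ 1` from the origin, the sine of the angle at the origin between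
this point and any point of the unit sphere whose tangent plane contains it; the cosine is
`1 / r`. -/
def horizonSin (r : ℝ) : ℝ := √(1 - (r ^ 2)⁻¹)

lemma horizonSin_sq {r : ℝ} (hr : 1 ≤ r) : horizonSin r ^ 2 = 1 - (r ^ 2)⁻¹ :=
  Real.sq_sqrt (sub_nonneg.2 (inv_le_one_of_one_le₀ (one_le_pow₀ hr)))

lemma horizonSin_pos {r : ℝ} (hr : 1 < r) : 0 < horizonSin r :=
  Real.sqrt_pos.2 (sub_pos.2 (inv_lt_one_of_one_lt₀ (one_lt_pow₀ hr two_ne_zero)))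

variable {E W : Type*} [NormedAddCommGroup E] [InnerProductSpace ℝ E] [NormedAddCommGroup W]
  [InnerProductSpace ℝ W]

/-- The cone over the horizon seen from `x`, that is, over the set of those points of the unit
sphere whose tangent plane contains `x`. -/
def horizonCone (x : E) : Set E := {v | ⟪x, v⟫ = ‖v‖}

lemma one_le_norm_of_mem_horizonCone {x v : E} (hv : v ∈ horizonCone x) (hv0 : v ≠ 0) :
    1 ≤ ‖x‖ := by
  refine le_of_mul_le_mul_right ?_ (norm_pos_iff.2 hv0)
  rw [one_mul]
  exact (show ⟪x, v⟫ = ‖v‖ from hv).symm.trans_le (real_inner_le_norm x v)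

lemma eq_smul_of_mem_horizonCone_of_norm_eq_one {x v : E} (hv : v ∈ horizonCone x)
    (hx : ‖x‖ = 1) : v = ‖v‖ • x := by
  have hinner : ⟪x, v⟫ = ‖x‖ * ‖v‖ := by rw [hx, one_mul]; exact hv
  simpa [hx] using (inner_eq_norm_mul_iff_real.1 hinner).symm

variable (J : WithLp 2 (ℝ × W) ≃ₗᵢ[ℝ] E)

/-- The unit vector spanning the first factor of the splitting `J` of `E`. -/
def splitAxis : E := J (WithLp.toLp 2 (1, 0))

/-- The coordinates of a vector with respect to the splitting `J`. -/
def splitCoord : E ≃L[ℝ] ℝ × W :=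
  J.symm.toContinuousLinearEquiv.trans (WithLp.prodContinuousLinearEquiv 2 ℝ ℝ W)

lemma splitCoord_apply_toLp (p : ℝ × W) : splitCoord J (J (WithLp.toLp 2 p)) = p := by
  simp [splitCoord]

lemma norm_splitAxis : ‖splitAxis J‖ = 1 := by
  simp [splitAxis]

lemma norm_sq_eq_splitCoord (v : E) :
    ‖v‖ ^ 2 = (splitCoord J v).1 ^ 2 + ‖(splitCoord J v).2‖ ^ 2 := by
  rw [← J.symm.norm_map, WithLp.prod_norm_sq_eq_of_L2, Real.norm_eq_abs, sq_abs]
  rfl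

lemma inner_apply_toLp (v : E) (p : ℝ × W) :
    ⟪v, J (WithLp.toLp 2 p)⟫ = (splitCoord J v).1 * p.1 + ⟪(splitCoord J v).2, p.2⟫ := by
  rw [real_inner_comm, J.inner_map_eq_flip, real_inner_comm]
  simp [WithLp.prod_inner_apply, splitCoord, mul_comm]

lemma splitCoord_fst (v : E) : (splitCoord J v).1 = ⟪v, splitAxis J⟫ := by
  simp [splitAxis, inner_apply_toLp]

/-- The reflection of `E` that exchanges `x` and `‖x‖ • splitAxis J`. It serves as a frame adapted
to `x` which, unlike a rotation, is given by a formula in every dimension. -/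
def axisReflection (x : E) : E ≃ₗᵢ[ℝ] E := (ℝ ∙ (x - ‖x‖ • splitAxis J))ᗮ.reflection

lemma axisReflection_apply_self (x : E) : axisReflection J x x = ‖x‖ • splitAxis J :=
  Submodule.reflection_sub (by simp [norm_smul, norm_splitAxis])

lemma axisReflection_apply_apply (x v : E) : axisReflection J x (axisReflection J x v) = v :=
  Submodule.reflection_reflection _ v

lemma inner_axisReflection_left (x v w : E) :
    ⟪axisReflection J x v, w⟫ = ⟪v, axisReflection J x w⟫ := by
  rw [LinearIsometryEquiv.inner_map_eq_flip, axisReflection, Submodule.reflection_symm]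

lemma splitCoord_axisReflection_fst {x : E} (hx : x ≠ 0) (v : E) :
    (splitCoord J (axisReflection J x v)).1 = ⟪x, v⟫ / ‖x‖ := by
  have haxis : axisReflection J x (splitAxis J) = ‖x‖⁻¹ • x := by
    rw [eq_inv_smul_iff₀ (norm_ne_zero_iff.2 hx), ← map_smul, ← axisReflection_apply_self,
      axisReflection_apply_apply]
  rw [splitCoord_fst, inner_axisReflection_left, haxis, inner_smul_right, real_inner_comm,
    inv_mul_eq_div]

lemma norm_splitCoord_axisReflection_snd_sq {x : E} (hx : x ≠ 0) (y : E) :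
    ‖(splitCoord J (axisReflection J x y)).2‖ ^ 2 = ‖y‖ ^ 2 - (⟪x, y⟫ / ‖x‖) ^ 2 := by
  rw [← LinearIsometryEquiv.norm_map (axisReflection J x) y, norm_sq_eq_splitCoord J,
    splitCoord_axisReflection_fst J hx, add_sub_cancel_left]

lemma axisReflection_apply (x v : E) :
    axisReflection J x v = v - (2 * (⟪x - ‖x‖ • splitAxis J, v⟫ / ‖x - ‖x‖ • splitAxis J‖ ^ 2)) •
      (x - ‖x‖ • splitAxis J) := by
  rw [axisReflection, Submodule.reflection_orthogonal_apply, Submodule.reflection_singleton_apply,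
    neg_sub, RCLike.ofReal_real_eq_id, id, mul_smul, ofNat_smul_eq_nsmul ℝ 2]

lemma abs_det_axisReflection [FiniteDimensional ℝ E] (x : E) :
    |LinearMap.det (axisReflection J x).toLinearEquiv.toLinearMap| = 1 := by
  rw [axisReflection, Submodule.det_reflection, abs_neg_one_pow]

/-- For `1 < ‖x‖`, a norm-preserving parametrization of `horizonCone x` by `W`. -/
def coneChart (x : E) (w : W) : E :=
  axisReflection J x (J (WithLp.toLp 2 (‖w‖ / ‖x‖, horizonSin ‖x‖ • w)))

lemma inner_coneChart {x : E} (hx : x ≠ 0) (y : E) (w : W) :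
    ⟪y, coneChart J x w⟫ = ⟪x, y⟫ / ‖x‖ * (‖w‖ / ‖x‖) +
      horizonSin ‖x‖ * ⟪(splitCoord J (axisReflection J x y)).2, w⟫ := by
  rw [coneChart, ← inner_axisReflection_left, inner_apply_toLp,
    splitCoord_axisReflection_fst J hx, inner_smul_right]

lemma norm_coneChart {x : E} (hx : 1 ≤ ‖x‖) (w : W) : ‖coneChart J x w‖ = ‖w‖ := by
  rw [← sq_eq_sq₀ (norm_nonneg _) (norm_nonneg _), coneChart, LinearIsometryEquiv.norm_map,
    J.norm_map, WithLp.prod_norm_sq_eq_of_L2]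
  simp only [WithLp.toLp_fst, WithLp.toLp_snd, norm_smul, Real.norm_eq_abs, mul_pow, sq_abs,
    horizonSin_sq hx]
  ring

lemma splitCoord_axisReflection_coneChart (x : E) (w : W) :
    splitCoord J (axisReflection J x (coneChart J x w)) = (‖w‖ / ‖x‖, horizonSin ‖x‖ • w) := by
  rw [coneChart, axisReflection_apply_apply, splitCoord_apply_toLp]

lemma inner_self_coneChart {x : E} (hx : x ≠ 0) (w : W) : ⟪x, coneChart J x w⟫ = ‖w‖ := by
  have hx' : ‖x‖ ≠ 0 := norm_ne_zero_iff.2 hx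
  have hinner := splitCoord_axisReflection_fst J hx (coneChart J x w)
  rw [splitCoord_axisReflection_coneChart, div_left_inj' hx'] at hinner
  exact hinner.symm

theorem bijOn_coneChart {x : E} (hx : 1 < ‖x‖) :
    BijOn (coneChart J x) univ (horizonCone x) := by
  have hx0 : x ≠ 0 := norm_pos_iff.1 (zero_lt_one.trans hx)
  refine ⟨fun w _ => ?_, fun w _ w' _ heq => ?_, fun v hv => ?_⟩
  · rw [horizonCone, mem_ofPred_eq, inner_self_coneChart J hx0, norm_coneChart J hx.le]
  · have hcoord := congrArg (fun v => (splitCoord J (axisReflection J x v)).2) heq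
    simp only [splitCoord_axisReflection_coneChart] at hcoord
    exact smul_right_injective W (horizonSin_pos hx).ne' hcoord
  · obtain ⟨p, hp⟩ : ∃ p, splitCoord J (axisReflection J x v) = p := ⟨_, rfl⟩
    have hv' : v = axisReflection J x (J (WithLp.toLp 2 p)) := by
      rw [← hp, splitCoord]
      simp [axisReflection_apply_apply]
    have hfst : p.1 = ‖v‖ / ‖x‖ := by
      rw [← hp, splitCoord_axisReflection_fst J hx0, show ⟪x, v⟫ = ‖v‖ from hv]
    have hsnd : ‖p.2‖ = horizonSin ‖x‖ * ‖v‖ := by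
      have hnorm := norm_sq_eq_splitCoord J (axisReflection J x v)
      rw [LinearIsometryEquiv.norm_map, hp, hfst, div_pow] at hnorm
      rw [← sq_eq_sq₀ (norm_nonneg _) (mul_nonneg (horizonSin_pos hx).le (norm_nonneg _)), mul_pow,
        horizonSin_sq hx.le]
      linear_combination -hnorm
    refine ⟨(horizonSin ‖x‖)⁻¹ • p.2, mem_univ _, ?_⟩
    rw [coneChart, norm_smul, norm_inv, Real.norm_of_nonneg (horizonSin_pos hx).le, hsnd,
      inv_mul_cancel_left₀ (horizonSin_pos hx).ne', smul_inv_smul₀ (horizonSin_pos hx).ne', ← hfst]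
    exact hv'.symm

lemma contDiffAt_coneChart {x : E} {w : W} (hx : 1 < ‖x‖) (haxis : x ≠ ‖x‖ • splitAxis J)
    (hw : w ≠ 0) :
    ContDiffAt ℝ 1 (fun p : E × W => coneChart J p.1 p.2) (x, w) := by
  have hx0 : x ≠ 0 := norm_pos_iff.1 (zero_lt_one.trans hx)
  have hnorm : ContDiffAt ℝ 1 (fun p : E × W => ‖p.1‖) (x, w) := contDiffAt_fst.norm ℝ hx0
  have hdiff : ContDiffAt ℝ 1 (fun p : E × W => p.1 - ‖p.1‖ • splitAxis J) (x, w) :=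
    contDiffAt_fst.sub (hnorm.smul contDiffAt_const)
  have hsin : ContDiffAt ℝ 1 (fun p : E × W => horizonSin ‖p.1‖) (x, w) :=
    (contDiffAt_const.sub ((hnorm.pow 2).inv (pow_ne_zero 2 (norm_ne_zero_iff.2 hx0)))).sqrt
      (Real.sqrt_pos.1 (horizonSin_pos hx)).ne'
  have hsplit : ContDiffAt ℝ 1 (fun p : E × W =>
      J (WithLp.toLp 2 (‖p.2‖ / ‖p.1‖, horizonSin ‖p.1‖ • p.2))) (x, w) :=
    (splitCoord J).symm.contDiff.contDiffAt.comp (x, w)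
      (((contDiffAt_snd.norm ℝ hw).div hnorm (norm_ne_zero_iff.2 hx0)).prodMk
        (hsin.smul contDiffAt_snd))
  simp only [coneChart, axisReflection_apply]
  exact hsplit.sub (ContDiffAt.smul (contDiffAt_const.mul ((hdiff.inner ℝ hsplit).div
    (hdiff.norm_sq ℝ) (pow_ne_zero 2 (norm_ne_zero_iff.2 (sub_ne_zero.2 haxis))))) hdiff)

end HorizonCone

section Jacobian

lemma det_prod_eq_of_apply {𝕜 W : Type*} [Field 𝕜] [AddCommGroup W] [Module 𝕜 W]
    [FiniteDimensional 𝕜 W] {M : 𝕜 × W →ₗ[𝕜] 𝕜 × W} {c : 𝕜} (hc : c ≠ 0) (ℓ : W →ₗ[𝕜] 𝕜)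
    (hM : ∀ h, M (0, h) = (ℓ h, c • h)) :
    LinearMap.det M =
      ((M (1, 0)).1 - c⁻¹ * ℓ (M (1, 0)).2) * c ^ Module.finrank 𝕜 W := by
  obtain ⟨p, hp⟩ : ∃ p, M (1, 0) = p := ⟨_, rfl⟩
  have hfactor : M = LinearMap.transvection (c⁻¹ • ℓ ∘ₗ LinearMap.snd 𝕜 𝕜 W) (1, 0) ∘ₗ
      LinearMap.prodMap ((p.1 - c⁻¹ * ℓ p.2) • LinearMap.id) (c • LinearMap.id) ∘ₗ
        LinearMap.transvection (LinearMap.fst 𝕜 𝕜 W) (0, c⁻¹ • p.2) := by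
    refine LinearMap.prod_ext (LinearMap.ext_ring ?_) (LinearMap.ext fun h => ?_)
    · refine Prod.ext ?_ ?_
      · simp [LinearMap.transvection.apply, hp, hc]
      · simp [LinearMap.transvection.apply, hp, inv_smul_smul₀ hc]
    · ext <;> simp [LinearMap.transvection.apply, hM, inv_mul_cancel_left₀ hc]
  rw [hp, hfactor, LinearMap.det_comp, LinearMap.det_comp, LinearMap.transvection.det,
    LinearMap.transvection.det, LinearMap.det_prodMap, LinearMap.det_smul, LinearMap.det_smul]
  simp

variable {E W : Type*} [NormedAddCommGroup E] [InnerProductSpace ℝ E]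
  [NormedAddCommGroup W] [InnerProductSpace ℝ W] (J : WithLp 2 (ℝ × W) ≃ₗᵢ[ℝ] E) {γ : ℝ → E}
  {t : ℝ} {w : W} {F' : ℝ × W →L[ℝ] E}

lemma hasFDerivAt_axisReflection_coneChart (x : E) (hw : w ≠ 0) :
    HasFDerivAt (fun w => splitCoord J (axisReflection J x (coneChart J x w)))
      (((‖w‖ * ‖x‖)⁻¹ • innerSL ℝ w).prod (horizonSin ‖x‖ • ContinuousLinearMap.id ℝ W)) w := by
  simp only [splitCoord_axisReflection_coneChart, div_eq_inv_mul]
  have hnorm : HasFDerivAt (fun w : W => ‖w‖) (‖w‖⁻¹ • innerSL ℝ w) w := by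
    have hsqrt := (hasStrictFDerivAt_norm_sq w).hasFDerivAt.sqrt
      (pow_ne_zero 2 (norm_ne_zero_iff.2 hw))
    simp only [Real.sqrt_sq (norm_nonneg _)] at hsqrt
    convert hsqrt using 1
    ext h
    simp only [smul_apply, coe_innerSL_apply, smul_eq_mul, one_div, mul_inv_rev, nsmul_eq_mul,
      Nat.cast_ofNat]
    field_simp
  rw [mul_inv_rev, mul_smul]
  exact (hnorm.const_mul ‖x‖⁻¹).prodMk ((hasFDerivAt_id w).const_smul (horizonSin ‖x‖))

lemma differentiableAt_coneChart (hγ : DifferentiableAt ℝ γ t) (ht : 1 < ‖γ t‖)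
    (haxis : γ t ≠ ‖γ t‖ • splitAxis J) (hw : w ≠ 0) :
    DifferentiableAt ℝ (fun p : ℝ × W => coneChart J (γ p.1) p.2) (t, w) := by
  have hpair : DifferentiableAt ℝ (fun p : ℝ × W => (γ p.1, p.2)) (t, w) :=
    (DifferentiableAt.comp (t, w) (g := γ) hγ differentiableAt_fst).prodMk differentiableAt_snd
  have hchart : DifferentiableAt ℝ (fun q : E × W => coneChart J q.1 q.2) (γ t, w) :=
    (contDiffAt_coneChart J ht haxis hw).differentiableAt one_ne_zero
  exact hchart.fun_comp' (t, w) hpair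

lemma hasDerivAt_coneChart
    (hF : HasFDerivAt (fun p : ℝ × W => coneChart J (γ p.1) p.2) F' (t, w)) :
    HasDerivAt (fun s => coneChart J (γ s) w) (F' (1, 0)) t := by
  have hline : HasDerivAt (fun s : ℝ => (s, w)) (1, 0) t :=
    (hasDerivAt_id t).prodMk (hasDerivAt_const t w)
  exact HasFDerivAt.comp_hasDerivAt (f := fun s : ℝ => (s, w)) t hF hline

lemma inner_coneChart_fderiv_coneChart (hγ : ContinuousAt γ t) (ht : 1 < ‖γ t‖)
    (hF : HasFDerivAt (fun p : ℝ × W => coneChart J (γ p.1) p.2) F' (t, w)) :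
    ⟪coneChart J (γ t) w, F' (1, 0)⟫ = 0 := by
  have hline := hasDerivAt_coneChart J hF
  have hconst : (fun s => ‖coneChart J (γ s) w‖ ^ 2) =ᶠ[𝓝 t] fun _ => ‖w‖ ^ 2 :=
    (hγ.norm.eventually (lt_mem_nhds ht)).mono fun s hs => by simp only [norm_coneChart J hs.le]
  have hzero := hline.norm_sq.unique ((hasDerivAt_const t _).congr_of_eventuallyEq hconst)
  linarith

lemma inner_fderiv_coneChart (hγ : DifferentiableAt ℝ γ t) (ht : γ t ≠ 0)
    (hF : HasFDerivAt (fun p : ℝ × W => coneChart J (γ p.1) p.2) F' (t, w)) :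
    ⟪γ t, F' (1, 0)⟫ = -⟪deriv γ t, coneChart J (γ t) w⟫ := by
  have hline := hasDerivAt_coneChart J hF
  have hconst : (fun s => ⟪γ s, coneChart J (γ s) w⟫) =ᶠ[𝓝 t] fun _ => ‖w‖ :=
    (hγ.continuousAt.eventually_ne ht).mono fun s hs => inner_self_coneChart J hs w
  have hzero := (hγ.hasDerivAt.inner ℝ hline).unique
    ((hasDerivAt_const t _).congr_of_eventuallyEq hconst)
  linarith

lemma abs_det_comp_axisReflection [FiniteDimensional ℝ E] (x : E) (A : ℝ × W →L[ℝ] E) :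
    |((splitCoord J : E →L[ℝ] ℝ × W) ∘L
        (axisReflection J x).toContinuousLinearEquiv.toContinuousLinearMap ∘L A).det| =
      |((splitCoord J : E →L[ℝ] ℝ × W) ∘L A).det| := by
  have hconj : ((splitCoord J : E →L[ℝ] ℝ × W) ∘L
      (axisReflection J x).toContinuousLinearEquiv.toContinuousLinearMap ∘L A).toLinearMap =
      ((splitCoord J).toLinearEquiv.toLinearMap ∘ₗ
        (axisReflection J x).toLinearEquiv.toLinearMap ∘ₗ
          (splitCoord J).toLinearEquiv.symm.toLinearMap) ∘ₗ
        ((splitCoord J : E →L[ℝ] ℝ × W) ∘L A).toLinearMap := by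
    ext <;> simp
  rw [ContinuousLinearMap.det, hconj, LinearMap.det_comp, LinearMap.det_conj, abs_mul,
    abs_det_axisReflection, one_mul, ContinuousLinearMap.det]

lemma fderiv_coneChart_apply_snd (hw : w ≠ 0)
    (hF : HasFDerivAt (fun p : ℝ × W => coneChart J (γ p.1) p.2) F' (t, w)) (h : W) :
    splitCoord J (axisReflection J (γ t) (F' (0, h))) =
      ((‖w‖ * ‖γ t‖)⁻¹ * ⟪w, h⟫, horizonSin ‖γ t‖ • h) := by
  have hcomp : HasFDerivAt (fun w => splitCoord J (axisReflection J (γ t) (coneChart J (γ t) w)))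
      ((splitCoord J : E →L[ℝ] ℝ × W) ∘L
        ((axisReflection J (γ t)).toContinuousLinearEquiv : E →L[ℝ] E) ∘L
          F' ∘L ContinuousLinearMap.inr ℝ ℝ W) w :=
    (splitCoord J).hasFDerivAt.comp w
      ((axisReflection J (γ t)).toContinuousLinearEquiv.hasFDerivAt.comp w
        (hF.comp w (hasFDerivAt_prodMk_right t w)))
  simpa using DFunLike.congr_fun
    (hcomp.unique (hasFDerivAt_axisReflection_coneChart J (γ t) hw)) h

/-- The left-hand side is the Schur complement of the lower right block of the Jacobian matrix. -/
lemma fderiv_coneChart_fst_sub (hγ : DifferentiableAt ℝ γ t) (ht : 1 < ‖γ t‖) (hw : w ≠ 0)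
    (hF : HasFDerivAt (fun p : ℝ × W => coneChart J (γ p.1) p.2) F' (t, w)) :
    (splitCoord J (axisReflection J (γ t) (F' (1, 0)))).1 - (horizonSin ‖γ t‖)⁻¹ *
        ((‖w‖ * ‖γ t‖)⁻¹ * ⟪w, (splitCoord J (axisReflection J (γ t) (F' (1, 0)))).2⟫) =
      -⟪deriv γ t, coneChart J (γ t) w⟫ / (‖γ t‖ * horizonSin ‖γ t‖ ^ 2) := by
  have hcpos : 0 < horizonSin ‖γ t‖ := horizonSin_pos ht
  have hγpos : 0 < ‖γ t‖ := zero_lt_one.trans ht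
  have hγ0 : γ t ≠ 0 := norm_pos_iff.1 hγpos
  have hinner := inner_fderiv_coneChart J hγ hγ0 hF
  have hsnd := inner_coneChart J hγ0 (F' (1, 0)) w
  rw [real_inner_comm, inner_coneChart_fderiv_coneChart J hγ.continuousAt ht hF, hinner,
    real_inner_comm w] at hsnd
  have hsnd' : ⟪w, (splitCoord J (axisReflection J (γ t) (F' (1, 0)))).2⟫ =
      ⟪deriv γ t, coneChart J (γ t) w⟫ / ‖γ t‖ * (‖w‖ / ‖γ t‖) / horizonSin ‖γ t‖ := by
    rw [eq_div_iff hcpos.ne']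
    linear_combination -hsnd
  rw [splitCoord_axisReflection_fst J hγ0, hinner, hsnd']
  field_simp
  rw [horizonSin_sq ht.le]
  field_simp
  ring

theorem abs_det_fderiv_coneChart [FiniteDimensional ℝ E] [FiniteDimensional ℝ W]
    (hγ : DifferentiableAt ℝ γ t) (ht : 1 < ‖γ t‖) (hw : w ≠ 0)
    (hF : HasFDerivAt (fun p : ℝ × W => coneChart J (γ p.1) p.2) F' (t, w)) :
    |((splitCoord J : E →L[ℝ] ℝ × W) ∘L F').det| = |⟪deriv γ t, coneChart J (γ t) w⟫| *
      (horizonSin ‖γ t‖ ^ Module.finrank ℝ W / (‖γ t‖ * horizonSin ‖γ t‖ ^ 2)) := by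
  have hcpos : 0 < horizonSin ‖γ t‖ := horizonSin_pos ht
  have hγpos : 0 < ‖γ t‖ := zero_lt_one.trans ht
  have hdet := det_prod_eq_of_apply (M := ((splitCoord J : E →L[ℝ] ℝ × W) ∘L
    ((axisReflection J (γ t)).toContinuousLinearEquiv : E →L[ℝ] E) ∘L F').toLinearMap) hcpos.ne'
    ((‖w‖ * ‖γ t‖)⁻¹ • innerSL ℝ w : W →L[ℝ] ℝ).toLinearMap
    (fun h => (fderiv_coneChart_apply_snd J hw hF h).trans (by simp))
  have hschur := fderiv_coneChart_fst_sub J hγ ht hw hF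
  rw [← abs_det_comp_axisReflection J (γ t), ContinuousLinearMap.det, hdet]
  refine (congrArg (fun r => |r * horizonSin ‖γ t‖ ^ Module.finrank ℝ W|) hschur).trans ?_
  rw [abs_mul, abs_div, abs_neg, abs_of_pos (pow_pos hcpos _),
    abs_of_pos (mul_pos hγpos (pow_pos hcpos 2))]
  ring

end Jacobian

section ConeDensity

variable {E W : Type*} [NormedAddCommGroup E] [InnerProductSpace ℝ E] [NormedAddCommGroup W]
  [InnerProductSpace ℝ W] [FiniteDimensional ℝ W] [MeasurableSpace W] [BorelSpace W]
  (J : WithLp 2 (ℝ × W) ≃ₗᵢ[ℝ] E)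

/-- The rate at which the part of `horizonCone x` in the unit ball sweeps out volume, counted with
multiplicity, when `x` moves with velocity `y`. -/
def coneDensity (x y : E) : ℝ≥0∞ :=
  ∫⁻ w in (Metric.ball 0 1 \ {0} : Set W), ENNReal.ofReal (|⟪y, coneChart J x w⟫| *
    (horizonSin ‖x‖ ^ Module.finrank ℝ W / (‖x‖ * horizonSin ‖x‖ ^ 2)))

theorem coneDensity_congr {x x' y y' : E} (hx : x ≠ 0) (hnorm : ‖x‖ = ‖x'‖) (hy : ‖y‖ = ‖y'‖)
    (hinner : ⟪x, y⟫ = ⟪x', y'⟫) : coneDensity J x y = coneDensity J x' y' := by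
  have hx' : x' ≠ 0 := norm_ne_zero_iff.1 (hnorm ▸ norm_ne_zero_iff.2 hx)
  set z := (splitCoord J (axisReflection J x y)).2 with hz
  set z' := (splitCoord J (axisReflection J x' y')).2 with hz'
  have hzz' : ‖z‖ = ‖z'‖ := by
    rw [← sq_eq_sq₀ (norm_nonneg _) (norm_nonneg _), hz, hz',
      norm_splitCoord_axisReflection_snd_sq J hx, norm_splitCoord_axisReflection_snd_sq J hx',
      hnorm, hy, hinner]
  let A : W ≃ₗᵢ[ℝ] W := (ℝ ∙ (z - z'))ᗮ.reflection
  have hA : A z = z' := Submodule.reflection_sub hzz'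
  have hset : A ⁻¹' (Metric.ball 0 1 \ {0}) = Metric.ball 0 1 \ {0} := by
    ext w
    simp
  have hchart (w : W) : ⟪y, coneChart J x w⟫ = ⟪y', coneChart J x' (A w)⟫ := by
    rw [inner_coneChart J hx, inner_coneChart J hx', ← hz, ← hz', ← hA, A.inner_map_map,
      A.norm_map, hinner, hnorm]
  simp only [coneDensity, hchart, hnorm]
  conv_lhs => rw [← hset]
  exact A.measurePreserving.setLIntegral_comp_preimage_emb
    A.toHomeomorph.measurableEmbedding (fun w => ENNReal.ofReal (|⟪y', coneChart J x' w⟫| * _)) _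

end ConeDensity

section HorizonCount

open scoped Pointwise

variable {E W : Type*} [NormedAddCommGroup E] [InnerProductSpace ℝ E] {γ : ℝ → E} {a b : ℝ}
  {K : ℝ≥0}

/-- The number of times in `s` at which the curve `γ` lies over `v`: for `‖v‖ = 1` these are the
passages of `γ` through the tangent plane of the unit sphere at `v`, and the count is invariant
under positive scaling of `v`. -/
def horizonCount (s : Set ℝ) (γ : ℝ → E) (v : E) : ℝ≥0∞ :=
  ({t ∈ s | v ∈ horizonCone (γ t)}.encard : ℝ≥0∞)

lemma horizonCount_smul (s : Set ℝ) (γ : ℝ → E) {c : ℝ} (hc : 0 < c) (v : E) :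
    horizonCount s γ (c • v) = horizonCount s γ v := by
  simp only [horizonCount, horizonCone, mem_ofPred_eq, inner_smul_right, norm_smul,
    Real.norm_of_nonneg hc.le, mul_right_inj' hc.ne']

/-- The times at which `γ` is differentiable and outside the closed unit ball. -/
def regularTimes (a b : ℝ) (γ : ℝ → E) : Set ℝ :=
  {t ∈ Ioo a b | DifferentiableAt ℝ γ t ∧ 1 < ‖γ t‖}

lemma measurableSet_regularTimes [CompleteSpace E] (hγ : ContinuousOn γ (Icc a b)) :
    MeasurableSet (regularTimes a b γ) := by
  have hopen : IsOpen (Ioo a b ∩ (fun t => ‖γ t‖) ⁻¹' Ioi 1) :=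
    (hγ.mono Ioo_subset_Icc_self).norm.isOpen_inter_preimage isOpen_Ioo isOpen_Ioi
  convert hopen.measurableSet.inter (measurableSet_of_differentiableAt ℝ γ) using 1
  ext t
  simp only [regularTimes, mem_inter_iff, mem_preimage, mem_Ioi, mem_ofPred_eq]
  tauto

lemma volume_sdiff_regularTimes_eq_zero [FiniteDimensional ℝ E]
    (hγ : LipschitzOnWith K γ (Icc a b)) :
    volume ({t ∈ Ico a b | 1 < ‖γ t‖} \ regularTimes a b γ) = 0 := by
  rw [measure_eq_zero_iff_ae_notMem]
  filter_upwards [ae_differentiableAt_of_lipschitzOnWith hγ,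
    measure_eq_zero_iff_ae_notMem.1 (Real.volume_singleton (a := a))]
    with t hdiff hta ⟨⟨ht, hout⟩, hreg⟩
  have htIoo : t ∈ Ioo a b := ⟨ht.1.lt_of_ne' hta, ht.2⟩
  exact hreg ⟨htIoo, hdiff htIoo, hout⟩

lemma addHaar_univ_smul_image_eq_zero [FiniteDimensional ℝ E] [MeasurableSpace E] [BorelSpace E]
    (ν : Measure E) [ν.IsAddHaarMeasure] (hdim : 2 < Module.finrank ℝ E) {s : Set ℝ}
    (hγ : LipschitzOnWith K γ s) : ν ((univ : Set ℝ) • γ '' s) = 0 := by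
  have hpair : LipschitzOnWith (max 1 (K * 1)) (fun p : ℝ × ℝ => (p.1, γ p.2)) (univ ×ˢ s) :=
    LipschitzWith.prod_fst.lipschitzOnWith.prodMk
      (hγ.comp LipschitzWith.prod_snd.lipschitzOnWith fun p hp => hp.2)
  have himage : (univ : Set ℝ) • γ '' s = (fun p : ℝ × ℝ => p.1 • γ p.2) '' (univ ×ˢ s) := by
    rw [← image_smul_prod, ← image_id (univ : Set ℝ), ← prodMap_image_prod, image_image, image_id]
    rfl
  rw [himage]
  exact addHaar_image_eq_zero_of_finrank_lt ν (by simpa using hdim)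
    (locallyLipschitzOn_comp_of_contDiffAt (f := fun q : ℝ × E => q.1 • q.2) hpair
      fun p _ => contDiffAt_fst.smul contDiffAt_snd)

variable [NormedAddCommGroup W] [InnerProductSpace ℝ W] (J : WithLp 2 (ℝ × W) ≃ₗᵢ[ℝ] E)

lemma ne_smul_splitAxis_of_notMem {s : Set ℝ}
    (haxis : splitAxis J ∉ (univ : Set ℝ) • γ '' s) {t : ℝ} (ht : t ∈ s) (ht0 : γ t ≠ 0) :
    γ t ≠ ‖γ t‖ • splitAxis J := fun h =>
  haxis (mem_smul.2 ⟨‖γ t‖⁻¹, mem_univ _, γ t, mem_image_of_mem γ ht,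
    (eq_inv_smul_iff₀ (norm_ne_zero_iff.2 ht0)).2 h.symm |>.symm⟩)

lemma coneChart_mem_ball_sdiff_zero_iff {x : E} (hx : 1 < ‖x‖) (w : W) :
    coneChart J x w ∈ Metric.ball (0 : E) 1 \ {0} ↔ w ∈ Metric.ball (0 : W) 1 \ {0} := by
  simp only [mem_sdiff, mem_ball_zero_iff, mem_singleton_iff, ← norm_eq_zero (a := w),
    ← norm_eq_zero (a := coneChart J x w), norm_coneChart J hx.le]

lemma banachIndicatrix_coneChart {s : Set ℝ} (hs : ∀ t ∈ s, 1 < ‖γ t‖) (v : E) :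
    banachIndicatrix (fun p : ℝ × W => splitCoord J (coneChart J (γ p.1) p.2))
        (s ×ˢ (Metric.ball 0 1 \ {0})) (splitCoord J v) =
      (Metric.ball 0 1 \ {0}).indicator (horizonCount s γ) v := by
  have hfiber : {p ∈ s ×ˢ (Metric.ball 0 1 \ {0} : Set W) |
      splitCoord J (coneChart J (γ p.1) p.2) = splitCoord J v} =
      {p | p.1 ∈ s ∧ coneChart J (γ p.1) p.2 = v ∧ v ∈ Metric.ball (0 : E) 1 \ {0}} := by
    ext p
    simp only [mem_prod, mem_ofPred_eq, (splitCoord J).injective.eq_iff]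
    refine ⟨fun ⟨⟨ht, hw⟩, hv⟩ => ⟨ht, hv, hv ▸ ?_⟩, fun ⟨ht, hv, hmem⟩ => ⟨⟨ht, ?_⟩, hv⟩⟩
    · exact (coneChart_mem_ball_sdiff_zero_iff J (hs _ ht) _).2 hw
    · exact (coneChart_mem_ball_sdiff_zero_iff J (hs _ ht) _).1 (hv ▸ hmem)
  rw [banachIndicatrix, hfiber]
  by_cases hv : v ∈ Metric.ball (0 : E) 1 \ {0}
  · have hinj : InjOn Prod.fst {p : ℝ × W | p.1 ∈ s ∧ coneChart J (γ p.1) p.2 = v ∧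
        v ∈ Metric.ball (0 : E) 1 \ {0}} := by
      rintro ⟨t, w⟩ ⟨ht, hw, -⟩ ⟨-, w'⟩ ⟨-, hw', -⟩ rfl
      exact Prod.ext rfl ((bijOn_coneChart J (hs t ht)).injOn (mem_univ w) (mem_univ w')
        (hw.trans hw'.symm))
    rw [indicator_of_mem hv, horizonCount, ← hinj.encard_image]
    congr 2
    ext t
    constructor
    · rintro ⟨p, ⟨ht, hw, -⟩, rfl⟩
      exact ⟨ht, hw ▸ (bijOn_coneChart J (hs _ ht)).mapsTo (mem_univ _)⟩
    · rintro ⟨ht, hcone⟩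
      obtain ⟨w, -, hw⟩ := (bijOn_coneChart J (hs t ht)).surjOn hcone
      exact ⟨(t, w), ⟨ht, hw, hv⟩, rfl⟩
  · rw [indicator_of_notMem hv]
    simp [hv]

variable [FiniteDimensional ℝ E] [MeasurableSpace E] [BorelSpace E]

lemma addHaar_image_coneChart_eq_zero [FiniteDimensional ℝ W] (ν : Measure E)
    [ν.IsAddHaarMeasure] {s : Set ℝ} (hγ : LipschitzOnWith K γ s) (hs : ∀ t ∈ s, 1 < ‖γ t‖)
    (haxis : ∀ t ∈ s, γ t ≠ ‖γ t‖ • splitAxis J) (hnull : volume s = 0) :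
    ν ((fun p : ℝ × W => coneChart J (γ p.1) p.2) '' (s ×ˢ {0}ᶜ)) = 0 := by
  borelize W
  have hpair : LipschitzOnWith (max (K * 1) 1) (fun p : ℝ × W => (γ p.1, p.2)) (s ×ˢ {0}ᶜ) :=
    (hγ.comp LipschitzWith.prod_fst.lipschitzOnWith fun p hp => hp.1).prodMk
      LipschitzWith.prod_snd.lipschitzOnWith
  have hcont : ∀ p ∈ s ×ˢ ({0}ᶜ : Set W),
      ContDiffAt ℝ 1 (fun q : E × W => coneChart J q.1 q.2) (γ p.1, p.2) := fun p hp =>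
    contDiffAt_coneChart J (hs _ hp.1) (haxis _ hp.1) hp.2
  have hlip : LocallyLipschitzOn (s ×ˢ {0}ᶜ) fun p : ℝ × W => coneChart J (γ p.1) p.2 :=
    locallyLipschitzOn_comp_of_contDiffAt hpair hcont
  have hdim : Module.finrank ℝ (ℝ × W) = Module.finrank ℝ E :=
    (splitCoord J).symm.toLinearEquiv.finrank_eq
  have hzero : (volume.prod (Measure.addHaar : Measure W)) (s ×ˢ {0}ᶜ) = 0 := by
    rw [Measure.prod_prod, hnull, zero_mul]
  exact addHaar_image_eq_zero_of_locallyLipschitzOn _ ν hdim hlip hzero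

theorem ae_horizonCount_Ico_eq [FiniteDimensional ℝ W] (hdim : 2 < Module.finrank ℝ E)
    (hγ : LipschitzOnWith K γ (Icc a b)) (haxis : splitAxis J ∉ (univ : Set ℝ) • γ '' Icc a b) :
    horizonCount (Ico a b) γ =ᵐ[volume] horizonCount (regularTimes a b γ) γ := by
  have : Nontrivial E := Module.nontrivial_of_finrank_pos (R := ℝ) (by lia)
  have hnotMem {N : Set E} (hN : volume N = 0) : ∀ᵐ v, v ∉ N := measure_eq_zero_iff_ae_notMem.1 hN
  have hIcc : {t ∈ Ico a b | 1 < ‖γ t‖} \ regularTimes a b γ ⊆ Icc a b := fun t ht =>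
    Ico_subset_Icc_self ht.1.1
  have hchart := addHaar_image_coneChart_eq_zero J volume (hγ.mono hIcc) (fun t ht => ht.1.2)
    (fun t ht => ne_smul_splitAxis_of_notMem J haxis (hIcc ht)
      (norm_pos_iff.1 (zero_lt_one.trans ht.1.2))) (volume_sdiff_regularTimes_eq_zero hγ)
  have hray := addHaar_univ_smul_image_eq_zero volume hdim hγ
  filter_upwards [hnotMem hchart, hnotMem hray, hnotMem (measure_singleton (0 : E))]
    with v hvchart hvray hv0
  rw [horizonCount, horizonCount]
  congr 2
  ext t
  refine ⟨fun ⟨ht, hcone⟩ => ?_, fun ⟨ht, hcone⟩ => ⟨Ioo_subset_Ico_self ht.1, hcone⟩⟩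
  by_contra hreg
  rcases (one_le_norm_of_mem_horizonCone hcone hv0).eq_or_lt with hone | hone
  · exact hvray (mem_smul.2 ⟨‖v‖, mem_univ _, γ t, mem_image_of_mem γ (Ico_subset_Icc_self ht),
      (eq_smul_of_mem_horizonCone_of_norm_eq_one hcone hone.symm).symm⟩)
  · obtain ⟨w, -, rfl⟩ := (bijOn_coneChart J hone).surjOn hcone
    refine hvchart ⟨(t, w), ⟨⟨⟨ht, hone⟩, fun h => hreg ⟨h, hcone⟩⟩, ?_⟩, rfl⟩
    rintro rfl
    exact hv0 (norm_eq_zero.1 ((norm_coneChart J hone.le 0).trans norm_zero))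

end HorizonCount

section HorizonArea

open scoped Pointwise

variable {E W : Type*} [NormedAddCommGroup E] [InnerProductSpace ℝ E] [NormedAddCommGroup W]
  [InnerProductSpace ℝ W] (J : WithLp 2 (ℝ × W) ≃ₗᵢ[ℝ] E) {γ : ℝ → E} {a b : ℝ}

lemma differentiableAt_coneChart_of_mem (haxis : splitAxis J ∉ (univ : Set ℝ) • γ '' Icc a b)
    {t : ℝ} {w : W} (ht : t ∈ regularTimes a b γ) (hw : w ∈ Metric.ball (0 : W) 1 \ {0}) :
    DifferentiableAt ℝ (fun p : ℝ × W => coneChart J (γ p.1) p.2) (t, w) :=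
  differentiableAt_coneChart J ht.2.1 ht.2.2 (ne_smul_splitAxis_of_notMem J haxis
    (Ioo_subset_Icc_self ht.1) (norm_pos_iff.1 (zero_lt_one.trans ht.2.2))) hw.2

variable [FiniteDimensional ℝ E] [FiniteDimensional ℝ W]

lemma abs_det_fderiv_splitCoord_coneChart (haxis : splitAxis J ∉ (univ : Set ℝ) • γ '' Icc a b)
    {t : ℝ} {w : W} (ht : t ∈ regularTimes a b γ) (hw : w ∈ Metric.ball (0 : W) 1 \ {0}) :
    |(fderiv ℝ (fun p : ℝ × W => splitCoord J (coneChart J (γ p.1) p.2)) (t, w)).det| =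
      |⟪deriv γ t, coneChart J (γ t) w⟫| *
        (horizonSin ‖γ t‖ ^ Module.finrank ℝ W / (‖γ t‖ * horizonSin ‖γ t‖ ^ 2)) := by
  have hF := (differentiableAt_coneChart_of_mem J haxis ht hw).hasFDerivAt
  have hcomp := (splitCoord J).hasFDerivAt.comp (t, w) hF
  rw [← abs_det_fderiv_coneChart J ht.2.1 ht.2.2 hw.2 hF, ← hcomp.fderiv]
  rfl

variable [MeasurableSpace W] [BorelSpace W]

lemma areaFormulaOn_coneChart (hγ : ContinuousOn γ (Icc a b))
    (haxis : splitAxis J ∉ (univ : Set ℝ) • γ '' Icc a b) :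
    AreaFormulaOn (volume.prod volume) (fun p : ℝ × W => splitCoord J (coneChart J (γ p.1) p.2))
      (fderiv ℝ fun p : ℝ × W => splitCoord J (coneChart J (γ p.1) p.2))
      (regularTimes a b γ ×ˢ (Metric.ball 0 1 \ {0})) := by
  have hmeas : MeasurableSet (regularTimes a b γ ×ˢ (Metric.ball 0 1 \ {0} : Set W)) :=
    (measurableSet_regularTimes hγ).prod (measurableSet_ball.diff (measurableSet_singleton 0))
  refine areaFormulaOn_of_hasFDerivWithinAt _ hmeas (fun p hp => ?_) (measurable_fderiv ℝ _)
  have hdiff := differentiableAt_coneChart_of_mem J haxis hp.1 hp.2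
  exact ((splitCoord J).differentiableAt.fun_comp' p hdiff).hasFDerivAt.hasFDerivWithinAt

variable [MeasurableSpace E] [BorelSpace E]

lemma measurePreserving_splitCoord : MeasurePreserving (splitCoord J) volume volume :=
  (WithLp.volume_preserving_ofLp ℝ W).comp J.symm.measurePreserving

theorem lintegral_horizonCount_regularTimes (hγ : ContinuousOn γ (Icc a b))
    (haxis : splitAxis J ∉ (univ : Set ℝ) • γ '' Icc a b) :
    AEMeasurable ((Metric.ball 0 1 \ {0}).indicator (horizonCount (regularTimes a b γ) γ)) ∧
      ∫⁻ v in Metric.ball 0 1 \ {0}, horizonCount (regularTimes a b γ) γ v =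
        ∫⁻ t in regularTimes a b γ, coneDensity J (γ t) (deriv γ t) := by
  have hindicatrix (v : E) := banachIndicatrix_coneChart J (s := regularTimes a b γ) (γ := γ)
    (fun t ht => ht.2.2) v
  obtain ⟨hmeas, harea⟩ := areaFormulaOn_coneChart J hγ haxis
  constructor
  · exact (hmeas.comp_quasiMeasurePreserving
      (measurePreserving_splitCoord J).quasiMeasurePreserving).congr (ae_of_all _ hindicatrix)
  · rw [← lintegral_indicator (measurableSet_ball.diff (measurableSet_singleton 0))]
    simp only [← hindicatrix]
    rw [(measurePreserving_splitCoord J).lintegral_comp_emb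
      (splitCoord J).toHomeomorph.measurableEmbedding (banachIndicatrix _ _),
      Measure.volume_eq_prod, harea, setLIntegral_prod]
    · exact setLIntegral_congr_fun (measurableSet_regularTimes hγ) fun t ht =>
        setLIntegral_congr_fun (measurableSet_ball.diff (measurableSet_singleton 0)) fun w hw =>
          congrArg ENNReal.ofReal (abs_det_fderiv_splitCoord_coneChart J haxis ht hw)
    · exact (ContinuousLinearMap.continuous_det.measurable.comp
        (measurable_fderiv ℝ _)).abs.ennreal_ofReal.aemeasurable

theorem lintegral_horizonCount_Ico {K : ℝ≥0} (hdim : 2 < Module.finrank ℝ E)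
    (hγ : LipschitzOnWith K γ (Icc a b)) (haxis : splitAxis J ∉ (univ : Set ℝ) • γ '' Icc a b) :
    AEMeasurable ((Metric.ball 0 1 \ {0}).indicator (horizonCount (Ico a b) γ)) ∧
      ∫⁻ v in Metric.ball 0 1 \ {0}, horizonCount (Ico a b) γ v =
        ∫⁻ t in regularTimes a b γ, coneDensity J (γ t) (deriv γ t) := by
  obtain ⟨hmeas, harea⟩ := lintegral_horizonCount_regularTimes J hγ.continuousOn haxis
  have hae := ae_horizonCount_Ico_eq J hdim hγ haxis
  constructor
  · refine hmeas.congr ?_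
    filter_upwards [hae] with v hv
    simp only [indicator, hv]
  · rw [← harea, lintegral_congr_ae (ae_restrict_of_ae hae)]

end HorizonArea

section SphereCount

variable {E : Type*} [NormedAddCommGroup E]

lemma indicator_ball_sdiff_zero_eq [NormedSpace ℝ E] {f : E → ℝ≥0∞}
    (hf : ∀ c : ℝ, 0 < c → ∀ v, f (c • v) = f v) (v : ({0}ᶜ : Set E)) :
    (Metric.ball 0 1 \ {0}).indicator f v =
      (Iio ⟨1, mem_Ioi.2 one_pos⟩).indicator (fun _ => f (homeomorphUnitSphereProd E v).1)
        (homeomorphUnitSphereProd E v).2 := by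
  have hball : (v : E) ∈ Metric.ball 0 1 \ {0} ↔
      (homeomorphUnitSphereProd E v).2 ∈ Iio ⟨1, mem_Ioi.2 one_pos⟩ := by
    rw [mem_Iio, ← Subtype.coe_lt_coe, homeomorphUnitSphereProd_apply_snd_coe, mem_sdiff,
      mem_ball_zero_iff]
    exact and_iff_left v.2
  have hfv : f (homeomorphUnitSphereProd E v).1 = f v := by
    rw [homeomorphUnitSphereProd_apply_fst_coe, hf _ (inv_pos.2 (norm_pos_iff.2 v.2))]
  simp only [indicator, hball, hfv]

variable [NormedSpace ℝ E] [FiniteDimensional ℝ E] [MeasurableSpace E] [BorelSpace E]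
  (μ : Measure E) [μ.IsAddHaarMeasure]

lemma lintegral_ball_sdiff_zero_eq {f : E → ℝ≥0∞} (hf : ∀ c : ℝ, 0 < c → ∀ v, f (c • v) = f v)
    (hmeas : AEMeasurable ((Metric.ball 0 1 \ {0}).indicator f) μ) :
    ∫⁻ v in Metric.ball 0 1 \ {0}, f v ∂μ = (∫⁻ p : Metric.sphere (0 : E) 1, f p ∂μ.toSphere) *
      Measure.volumeIoiPow (Module.finrank ℝ E - 1) (Iio ⟨1, mem_Ioi.2 one_pos⟩) := by
  let g (q : Metric.sphere (0 : E) 1 × Ioi (0 : ℝ)) : ℝ≥0∞ :=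
    (Iio ⟨1, mem_Ioi.2 one_pos⟩).indicator (fun _ => f q.1) q.2
  have hg : ((Metric.ball 0 1 \ {0}).indicator f ∘ Subtype.val : ({0}ᶜ : Set E) → ℝ≥0∞) =
      g ∘ homeomorphUnitSphereProd E := funext (indicator_ball_sdiff_zero_eq hf)
  have hpolar := μ.measurePreserving_homeomorphUnitSphereProd
  have hemb := (homeomorphUnitSphereProd E).measurableEmbedding
  have hcompl : MeasurableSet ({0}ᶜ : Set E) := (measurableSet_singleton 0).compl
  have hgmeas : AEMeasurable g
      (μ.toSphere.prod (Measure.volumeIoiPow (Module.finrank ℝ E - 1))) := by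
    rw [← hpolar.map_eq, hemb.aemeasurable_map_iff, ← hg,
      ← (MeasurableEmbedding.subtype_coe hcompl).aemeasurable_map_iff,
      map_comap_subtype_coe hcompl]
    exact hmeas.restrict
  calc ∫⁻ v in Metric.ball 0 1 \ {0}, f v ∂μ
      = ∫⁻ v in {0}ᶜ, (Metric.ball 0 1 \ {0}).indicator f v ∂μ := by
        rw [setLIntegral_indicator (measurableSet_ball.diff (measurableSet_singleton 0)),
          inter_eq_left.2 fun v hv => hv.2]
    _ = ∫⁻ v : ({0}ᶜ : Set E), g (homeomorphUnitSphereProd E v) ∂μ.comap Subtype.val := by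
        rw [← lintegral_subtype_comap hcompl]
        exact congrArg (lintegral _) hg
    _ = (∫⁻ p : Metric.sphere (0 : E) 1, f p ∂μ.toSphere) *
          Measure.volumeIoiPow (Module.finrank ℝ E - 1) (Iio ⟨1, mem_Ioi.2 one_pos⟩) := by
        rw [hpolar.lintegral_comp_emb hemb g, lintegral_prod _ hgmeas,
          ← lintegral_mul_const' _ _ (by simp [Measure.volumeIoiPow_apply_Iio])]
        simp only [g, lintegral_indicator_const measurableSet_Iio]

theorem lintegral_toSphere_eq_finrank_mul {f : E → ℝ≥0∞}
    (hf : ∀ c : ℝ, 0 < c → ∀ v, f (c • v) = f v)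
    (hmeas : AEMeasurable ((Metric.ball 0 1 \ {0}).indicator f) μ) :
    ∫⁻ p : Metric.sphere (0 : E) 1, f p ∂μ.toSphere =
      Module.finrank ℝ E * ∫⁻ v in Metric.ball 0 1 \ {0}, f v ∂μ := by
  nontriviality E
  have hpos : 0 < Module.finrank ℝ E := Module.finrank_pos
  rw [lintegral_ball_sdiff_zero_eq μ hf hmeas, mul_left_comm, Measure.volumeIoiPow_apply_Iio,
    one_pow, Nat.cast_pred hpos, sub_add_cancel, ← ENNReal.ofReal_natCast,
    ← ENNReal.ofReal_mul (Nat.cast_nonneg _), mul_one_div_cancel (Nat.cast_pos.2 hpos).ne',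
    ENNReal.ofReal_one, mul_one]

end SphereCount

lemma horizon_eq_lintegral_horizonCount (a b : ℝ) (γ : ℝ → E3) :
    horizon a b γ = ∫⁻ p : Metric.sphere (0 : E3) 1, horizonCount (Ico a b) γ p
      ∂(volume : Measure E3).toSphere := by
  simp only [horizon, horizonCount, horizonCone, mem_ofPred_eq, norm_eq_of_mem_sphere]

section HorizonCongr

open scoped Pointwise

variable {E : Type*} [NormedAddCommGroup E] [InnerProductSpace ℝ E]

lemma inner_deriv_eq_of_norm_eventuallyEq {γ δ : ℝ → E} {t : ℝ} (hγ : DifferentiableAt ℝ γ t)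
    (hδ : DifferentiableAt ℝ δ t) (hnorm : ∀ᶠ s in 𝓝 t, ‖γ s‖ = ‖δ s‖) :
    ⟪γ t, deriv γ t⟫ = ⟪δ t, deriv δ t⟫ := by
  have hsq : (fun s => ‖γ s‖ ^ 2) =ᶠ[𝓝 t] fun s => ‖δ s‖ ^ 2 :=
    hnorm.mono fun s hs => congrArg (· ^ 2) hs
  exact mul_left_cancel₀ two_ne_zero
    (hγ.hasDerivAt.norm_sq.unique (hδ.hasDerivAt.norm_sq.congr_of_eventuallyEq hsq))

variable [FiniteDimensional ℝ E]

lemma exists_splitAxis_eq {W : Type*} [NormedAddCommGroup W] [InnerProductSpace ℝ W]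
    [FiniteDimensional ℝ W] (hdim : Module.finrank ℝ E = Module.finrank ℝ W + 1) {e : E}
    (he : ‖e‖ = 1) : ∃ J : WithLp 2 (ℝ × W) ≃ₗᵢ[ℝ] E, splitAxis J = e := by
  have hfinrank : Module.finrank ℝ (WithLp 2 (ℝ × W)) = Module.finrank ℝ E := by
    rw [(WithLp.linearEquiv 2 ℝ (ℝ × W)).finrank_eq, Module.finrank_prod, Module.finrank_self,
      hdim, add_comm]
  let J : WithLp 2 (ℝ × W) ≃ₗᵢ[ℝ] E :=
    (stdOrthonormalBasis ℝ _).equiv (stdOrthonormalBasis ℝ E) (finCongr hfinrank)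
  exact ⟨J.trans (ℝ ∙ (splitAxis J - e))ᗮ.reflection,
    Submodule.reflection_sub ((norm_splitAxis J).trans he.symm)⟩

lemma exists_splitAxis_notMem_univ_smul {W : Type*} [NormedAddCommGroup W] [InnerProductSpace ℝ W]
    [FiniteDimensional ℝ W] [MeasurableSpace E] [BorelSpace E]
    (hdim : Module.finrank ℝ E = Module.finrank ℝ W + 1) {S : Set E}
    (hS : volume ((univ : Set ℝ) • S) = 0) :
    ∃ J : WithLp 2 (ℝ × W) ≃ₗᵢ[ℝ] E, splitAxis J ∉ (univ : Set ℝ) • S := by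
  have : Nontrivial E := Module.nontrivial_of_finrank_pos (R := ℝ) (by lia)
  obtain ⟨v, hvS, hv0⟩ := ((measure_eq_zero_iff_ae_notMem.1 hS).and
    (measure_eq_zero_iff_ae_notMem.1 (measure_singleton (0 : E)))).exists
  have hv : ‖v‖ ≠ 0 := norm_ne_zero_iff.2 hv0
  obtain ⟨J, hJ⟩ := exists_splitAxis_eq hdim
    (show ‖‖v‖⁻¹ • v‖ = 1 by rw [norm_smul, norm_inv, norm_norm, inv_mul_cancel₀ hv])
  refine ⟨J, fun hmem => hvS ?_⟩
  obtain ⟨c, -, x, hx, hcx⟩ := mem_smul.1 (hJ ▸ hmem)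
  refine mem_smul.2 ⟨‖v‖ * c, mem_univ _, x, hx, ?_⟩
  rw [mul_smul, hcx, smul_inv_smul₀ hv]

variable {γ δ : ℝ → E} {K L : ℝ≥0} {a b : ℝ}

lemma regularTimes_ae_eq_of_norm_eq (hγ : LipschitzOnWith K γ (Icc a b))
    (hδ : LipschitzOnWith L δ (Icc a b)) (hnorm : ∀ t ∈ Icc a b, ‖γ t‖ = ‖δ t‖) :
    regularTimes a b γ =ᵐ[volume] regularTimes a b δ := by
  filter_upwards [ae_differentiableAt_of_lipschitzOnWith hγ,
    ae_differentiableAt_of_lipschitzOnWith hδ] with t htγ htδ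
  refine propext (and_congr_right fun ht => ?_)
  rw [hnorm t (Ioo_subset_Icc_self ht)]
  exact and_congr_left fun _ => iff_of_true (htγ ht) (htδ ht)

variable [MeasurableSpace E] [BorelSpace E]

theorem lintegral_horizonCount_congr (hdim : 2 < Module.finrank ℝ E)
    (hγ : LipschitzOnWith K γ (Icc a b)) (hδ : LipschitzOnWith L δ (Icc a b))
    (hnorm : ∀ t ∈ Icc a b, ‖γ t‖ = ‖δ t‖)
    (hderiv : ∀ᵐ t : ℝ, t ∈ Ioo a b → ‖deriv γ t‖ = ‖deriv δ t‖) :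
    ∫⁻ p : Metric.sphere (0 : E) 1, horizonCount (Ico a b) γ p ∂(volume : Measure E).toSphere =
      ∫⁻ p : Metric.sphere (0 : E) 1, horizonCount (Ico a b) δ p
        ∂(volume : Measure E).toSphere := by
  have hfinrank : Module.finrank ℝ E =
      Module.finrank ℝ (EuclideanSpace ℝ (Fin (Module.finrank ℝ E - 1))) + 1 := by
    rw [finrank_euclideanSpace_fin]
    lia
  have hnull : volume ((univ : Set ℝ) • (γ '' Icc a b ∪ δ '' Icc a b)) = 0 := by
    rw [smul_union]
    exact measure_union_null (addHaar_univ_smul_image_eq_zero volume hdim hγ)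
      (addHaar_univ_smul_image_eq_zero volume hdim hδ)
  obtain ⟨J, hJ⟩ := exists_splitAxis_notMem_univ_smul hfinrank hnull
  rw [smul_union, mem_union, not_or] at hJ
  obtain ⟨hγmeas, hγarea⟩ := lintegral_horizonCount_Ico J hdim hγ hJ.1
  obtain ⟨hδmeas, hδarea⟩ := lintegral_horizonCount_Ico J hdim hδ hJ.2
  rw [lintegral_toSphere_eq_finrank_mul volume (fun c hc => horizonCount_smul _ γ hc) hγmeas,
    lintegral_toSphere_eq_finrank_mul volume (fun c hc => horizonCount_smul _ δ hc) hδmeas,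
    hγarea, hδarea]
  congr 1
  rw [setLIntegral_congr (regularTimes_ae_eq_of_norm_eq hγ hδ hnorm)]
  refine setLIntegral_congr_fun_ae (measurableSet_regularTimes hδ.continuousOn) ?_
  filter_upwards [ae_differentiableAt_of_lipschitzOnWith hγ, hderiv] with t htγ htderiv ht
  have hIcc : ∀ᶠ s in 𝓝 t, s ∈ Icc a b := Icc_mem_nhds ht.1.1 ht.1.2
  have hnormt := hnorm t (Ioo_subset_Icc_self ht.1)
  exact coneDensity_congr J (norm_pos_iff.1 (hnormt ▸ zero_lt_one.trans ht.2.2)) hnormt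
    (htderiv ht.1)
    (inner_deriv_eq_of_norm_eventuallyEq (htγ ht.1) ht.2.1 (hIcc.mono hnorm))

end HorizonCongr

section SphericalProjection

variable {V : Type*} [NormedAddCommGroup V] [InnerProductSpace ℝ V] {γ : ℝ → V}

/-- The radial projection of the curve `γ` to the unit sphere, with value `0` where `γ` vanishes. -/
def sphericalProjection (γ : ℝ → V) (t : ℝ) : V := ‖γ t‖⁻¹ • γ t

lemma norm_sphericalProjection {t : ℝ} (ht : γ t ≠ 0) : ‖sphericalProjection γ t‖ = 1 := by
  rw [sphericalProjection, norm_smul, norm_inv, norm_norm,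
    inv_mul_cancel₀ (norm_ne_zero_iff.2 ht)]

lemma norm_smul_sphericalProjection (γ : ℝ → V) (t : ℝ) :
    ‖γ t‖ • sphericalProjection γ t = γ t := by
  rcases eq_or_ne (γ t) 0 with ht | ht
  · rw [sphericalProjection, ht, smul_zero, smul_zero]
  · rw [sphericalProjection, smul_inv_smul₀ (norm_ne_zero_iff.2 ht)]

lemma exists_lipschitzOnWith_sphericalProjection {K : ℝ≥0} {s : Set ℝ} (hs : IsCompact s)
    (hγ : LipschitzOnWith K γ s) (h0 : ∀ t ∈ s, γ t ≠ 0) :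
    ∃ L, LipschitzOnWith L (sphericalProjection γ) s :=
  (locallyLipschitzOn_comp_of_contDiffAt (f := fun x : V => ‖x‖⁻¹ • x) hγ fun t ht =>
    ((contDiffAt_norm ℝ (h0 t ht)).inv (norm_ne_zero_iff.2 (h0 t ht))).smul
      contDiffAt_id).exists_lipschitzOnWith_of_compact hs

lemma norm_deriv_smul_sq {ρ : ℝ → ℝ} {u : ℝ → V} {t : ℝ} (hρ : DifferentiableAt ℝ ρ t)
    (hu : DifferentiableAt ℝ u t) (hunit : ∀ᶠ s in 𝓝 t, ‖u s‖ = 1) :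
    ‖deriv (fun s => ρ s • u s) t‖ ^ 2 = deriv ρ t ^ 2 + ρ t ^ 2 * ‖deriv u t‖ ^ 2 := by
  have horth : ⟪ρ t • deriv u t, deriv ρ t • u t⟫ = 0 := by
    have hconst : HasDerivAt (fun s => ‖u s‖ ^ 2) 0 t :=
      (hasDerivAt_const t (1 : ℝ)).congr_of_eventuallyEq
        (hunit.mono fun s hs => by simp only [hs, one_pow])
    have hinner : ⟪u t, deriv u t⟫ = 0 := by
      linarith [hu.hasDerivAt.norm_sq.unique hconst]
    rw [inner_smul_left, inner_smul_right, real_inner_comm, hinner, mul_zero, mul_zero]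
  rw [(hρ.hasDerivAt.fun_smul hu.hasDerivAt).deriv, sq,
    norm_add_sq_eq_norm_sq_add_norm_sq_real horth, ← sq, ← sq, norm_smul, norm_smul,
    hunit.self_of_nhds, Real.norm_eq_abs, Real.norm_eq_abs]
  simp only [mul_pow, sq_abs, mul_one]
  ring

end SphericalProjection

section Unfolding

/-- The point of the unit circle at polar angle `θ`. -/
def circlePoint (θ : ℝ) : E2 := !₂[Real.cos θ, Real.sin θ]

lemma norm_circlePoint (θ : ℝ) : ‖circlePoint θ‖ = 1 := by
  simp [circlePoint, EuclideanSpace.norm_eq, Fin.sum_univ_two]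

lemma contDiff_circlePoint : ContDiff ℝ 1 circlePoint := by
  refine contDiff_euclidean.2 fun i => ?_
  fin_cases i
  · exact Real.contDiff_cos
  · exact Real.contDiff_sin

lemma hasDerivAt_circlePoint (θ : ℝ) : HasDerivAt circlePoint (circlePoint (θ + π / 2)) θ := by
  rw [circlePoint, Real.cos_add_pi_div_two, Real.sin_add_pi_div_two]
  have hcoord : HasDerivAt (fun φ => ![Real.cos φ, Real.sin φ]) ![-Real.sin θ, Real.cos θ] θ := by
    refine hasDerivAt_pi.2 fun i => ?_
    fin_cases i
    · exact Real.hasDerivAt_cos θ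
    · exact Real.hasDerivAt_sin θ
  exact (PiLp.continuousLinearEquiv 2 ℝ fun _ : Fin 2 => ℝ).symm.hasFDerivAt.comp_hasDerivAt θ
    hcoord

variable {γ : ℝ → E3} {K : ℝ≥0} {a b : ℝ}

lemma unfolding_eq_smul_circlePoint (a : ℝ) (γ : ℝ → E3) :
    unfolding a γ = fun t => ‖γ t‖ • circlePoint (sphericalArc a γ t) := rfl

lemma norm_unfolding (a : ℝ) (γ : ℝ → E3) (t : ℝ) : ‖unfolding a γ t‖ = ‖γ t‖ := by
  rw [unfolding_eq_smul_circlePoint, norm_smul, norm_norm, norm_circlePoint, mul_one]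

lemma exists_lipschitzOnWith_unfolding (hγ : LipschitzOnWith K γ (Icc a b))
    (h0 : ∀ t ∈ Icc a b, γ t ≠ 0) : ∃ L, LipschitzOnWith L (unfolding a γ) (Icc a b) := by
  obtain ⟨L, hL⟩ := exists_lipschitzOnWith_sphericalProjection isCompact_Icc hγ h0
  exact (locallyLipschitzOn_comp_of_contDiffAt (f := fun p : E3 × ℝ => ‖p.1‖ • circlePoint p.2)
    (hγ.prodMk (lipschitzOnWith_arcLength hL)) fun t ht =>
      (contDiffAt_fst.norm ℝ (h0 t ht)).smul
        (contDiff_circlePoint.contDiffAt.comp _ contDiffAt_snd)).exists_lipschitzOnWith_of_compact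
          isCompact_Icc

/-- In polar coordinates `γ = ρ u` with `‖u‖ = 1`, the speed satisfies
`‖γ'‖² = ρ'² + ρ² ‖u'‖²`, and the polar angle of the unfolding grows at the rate `‖u'‖`. -/
theorem ae_norm_deriv_unfolding (hab : a ≤ b) (hγ : LipschitzOnWith K γ (Icc a b))
    (h0 : ∀ t ∈ Icc a b, γ t ≠ 0) :
    ∀ᵐ t : ℝ, t ∈ Ioo a b → ‖deriv (unfolding a γ) t‖ = ‖deriv γ t‖ := by
  obtain ⟨L, hL⟩ := exists_lipschitzOnWith_sphericalProjection isCompact_Icc hγ h0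
  filter_upwards [ae_differentiableAt_of_lipschitzOnWith hγ,
    ae_differentiableAt_of_lipschitzOnWith hL, ae_hasDerivAt_arcLength hab hL]
    with t hγt hprojt harct ht
  have hIcc : ∀ᶠ s in 𝓝 t, s ∈ Icc a b := Icc_mem_nhds ht.1 ht.2
  have hρ : DifferentiableAt ℝ (fun s => ‖γ s‖) t :=
    (hγt ht).norm ℝ (h0 t (Ioo_subset_Icc_self ht))
  have harc : HasDerivAt (sphericalArc a γ) ‖deriv (sphericalProjection γ) t‖ t := harct ht
  have hcircle : HasDerivAt (fun s => circlePoint (sphericalArc a γ s))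
      (‖deriv (sphericalProjection γ) t‖ • circlePoint (sphericalArc a γ t + π / 2)) t :=
    (hasDerivAt_circlePoint _).scomp t harc
  have hspeed : ‖deriv (fun s => circlePoint (sphericalArc a γ s)) t‖ =
      ‖deriv (sphericalProjection γ) t‖ := by
    rw [hcircle.deriv, norm_smul, norm_norm, norm_circlePoint, mul_one]
  have hγpolar := norm_deriv_smul_sq hρ (hprojt ht)
    (hIcc.mono fun s hs => norm_sphericalProjection (h0 s hs))
  simp only [norm_smul_sphericalProjection] at hγpolar
  rw [← sq_eq_sq₀ (norm_nonneg _) (norm_nonneg _), unfolding_eq_smul_circlePoint, hγpolar,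
    norm_deriv_smul_sq hρ hcircle.differentiableAt (Filter.Eventually.of_forall fun s =>
      norm_circlePoint _), hspeed]

/-- The embedding `emb` as a linear isometry. -/
def embₗᵢ : E2 →ₗᵢ[ℝ] E3 where
  toFun := emb
  map_add' v w := by ext i; fin_cases i <;> simp [emb]
  map_smul' c v := by ext i; fin_cases i <;> simp [emb]
  norm_map' v := by simp [emb, EuclideanSpace.norm_eq, Fin.sum_univ_three]

theorem horizon_emb_unfolding (hab : a ≤ b) (hγ : LipschitzOnWith K γ (Icc a b))
    (h0 : ∀ t ∈ Icc a b, γ t ≠ 0) :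
    horizon a b (fun t => emb (unfolding a γ t)) = horizon a b γ := by
  obtain ⟨L, hL⟩ := exists_lipschitzOnWith_unfolding hγ h0
  rw [horizon_eq_lintegral_horizonCount, horizon_eq_lintegral_horizonCount]
  refine lintegral_horizonCount_congr (by simp) (embₗᵢ.lipschitz.comp_lipschitzOnWith hL) hγ
    (fun t _ => (embₗᵢ.norm_map _).trans (norm_unfolding a γ t)) ?_
  filter_upwards [ae_differentiableAt_of_lipschitzOnWith hL, ae_norm_deriv_unfolding hab hγ h0]
    with t hdiff hnorm ht
  have hderiv : HasDerivAt (fun s => emb (unfolding a γ s)) (embₗᵢ (deriv (unfolding a γ) t)) t :=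
    embₗᵢ.toContinuousLinearMap.hasFDerivAt.comp_hasDerivAt t (hdiff ht).hasDerivAt
  rw [← hnorm ht, ← embₗᵢ.norm_map, ← hderiv.deriv]

theorem eVariationOn_unfolding (hab : a ≤ b) (hγ : LipschitzOnWith K γ (Icc a b))
    (h0 : ∀ t ∈ Icc a b, γ t ≠ 0) :
    eVariationOn (unfolding a γ) (Icc a b) = eVariationOn γ (Icc a b) := by
  obtain ⟨L, hL⟩ := exists_lipschitzOnWith_unfolding hγ h0
  exact eVariationOn_Icc_congr_of_norm_deriv_eq hab hL hγ (ae_norm_deriv_unfolding hab hγ h0)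

end Unfolding

lemma lipschitzOnWith_of_hasConstantSpeedOnWith {M : Type*} [PseudoEMetricSpace M] {f : ℝ → M}
    {s : Set ℝ} {C : ℝ≥0} (hf : HasConstantSpeedOnWith f s C) : LipschitzOnWith C f s := by
  have hle {x y : ℝ} (hx : x ∈ s) (hy : y ∈ s) (hxy : x ≤ y) :
      edist (f x) (f y) ≤ C * edist x y := by
    calc edist (f x) (f y) ≤ eVariationOn f (s ∩ Icc x y) :=
          eVariationOn.edist_le f ⟨hx, left_mem_Icc.2 hxy⟩ ⟨hy, right_mem_Icc.2 hxy⟩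
      _ = C * edist x y := by
          rw [hf hx hy, ENNReal.ofReal_mul C.coe_nonneg, ENNReal.ofReal_coe_nnreal, edist_comm,
            edist_dist, Real.dist_eq, abs_of_nonneg (sub_nonneg.2 hxy)]
  intro x hx y hy
  rcases le_total x y with hxy | hyx
  · exact hle hx hy hxy
  · rw [edist_comm, edist_comm x]
    exact hle hy hx hyx

theorem unfolding_preserves_height_length_horizon_general {a b : ℝ} (hab : a ≤ b) {γ : ℝ → E3}
    {K : ℝ≥0} (hγ : LipschitzOnWith K γ (Icc a b)) (h0 : ∀ t ∈ Icc a b, γ t ≠ 0) :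
    (∀ t ∈ Icc a b, ‖unfolding a γ t‖ = ‖γ t‖) ∧
    eVariationOn (unfolding a γ) (Icc a b) = eVariationOn γ (Icc a b) ∧
    horizon a b (fun t => emb (unfolding a γ t)) = horizon a b γ ∧
    (horizon a b (fun t => emb (unfolding a γ t))).toReal /
        (eVariationOn (unfolding a γ) (Icc a b)).toReal =
      (horizon a b γ).toReal / (eVariationOn γ (Icc a b)).toReal := by
  have hlength := eVariationOn_unfolding hab hγ h0
  have hhorizon := horizon_emb_unfolding hab hγ h0
  exact ⟨fun t _ => norm_unfolding a γ t, hlength, hhorizon, by rw [hlength, hhorizon]⟩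

/-- **Unfolding preserves height, length, horizon and efficiency.** -/
theorem unfolding_preserves_height_length_horizon
    (a b : ℝ) (hab : a < b) (γ : ℝ → E3) (C : ℝ≥0)
    (hcont : ContinuousOn γ (Set.Icc a b))
    (hrect : eVariationOn γ (Set.Icc a b) ≠ ⊤)
    (hspeed : HasConstantSpeedOnWith γ (Set.Icc a b) C)
    (hout : ∀ t ∈ Set.Icc a b, 1 ≤ ‖γ t‖) :
    (∀ t ∈ Set.Icc a b, ‖unfolding a γ t‖ = ‖γ t‖) ∧
    eVariationOn (unfolding a γ) (Set.Icc a b) = eVariationOn γ (Set.Icc a b) ∧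
    horizon a b (fun t => emb (unfolding a γ t)) = horizon a b γ ∧
    (horizon a b (fun t => emb (unfolding a γ t))).toReal /
        (eVariationOn (unfolding a γ) (Set.Icc a b)).toReal =
      (horizon a b γ).toReal / (eVariationOn γ (Set.Icc a b)).toReal :=
  unfolding_preserves_height_length_horizon_general hab.le
    (lipschitzOnWith_of_hasConstantSpeedOnWith hspeed)
    fun t ht => norm_pos_iff.1 (zero_lt_one.trans_le (hout t ht))
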